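/- Assume (H4.1) and (H4.2). Let u₁ ∈ Θ be a viscosity subsolution and u₂ ∈ Θ a viscosity supersolution of the Isaacs equation ∂_t w(t,x) + H⁻(t, x, w, Dw, D²w) = 0 on [0,T)×ℝⁿ with terminal condition w(T,x) = Φ(x), x ∈ ℝⁿ. Then u₁(t,x) ≤ u₂(t,x) for all (t,x) ∈ [0,T]×ℝⁿ. -/

import Mathlib

noncomputable section

open scoped RealInnerProductSpace Matrix

attribute [local instance] Matrix.frobeniusNormedAddCommGroup

/-- The Euclidean state space `ℝⁿ`. -/
abbrev Eucl (n : ℕ) := EuclideanSpace ℝ (Fin n)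

/-- Time derivative `∂φ/∂t (t,x)` of a function `φ : ℝ × ℝⁿ → ℝ`. -/
def timeDeriv {n : ℕ} (φ : ℝ → Eucl n → ℝ) (t : ℝ) (x : Eucl n) : ℝ :=
  deriv (fun s => φ s x) t

/-- Spatial gradient `Dφ(t,x) ∈ ℝⁿ`. -/
def spaceGrad {n : ℕ} (φ : ℝ → Eucl n → ℝ) (t : ℝ) (x : Eucl n) : Eucl n :=
  gradient (fun y => φ t y) x

/-- Spatial Hessian `D²φ(t,x)` as an `n × n` matrix. -/
def spaceHess {n : ℕ} (φ : ℝ → Eucl n → ℝ) (t : ℝ) (x : Eucl n) :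
    Matrix (Fin n) (Fin n) ℝ :=
  Matrix.of fun i j =>
    fderiv ℝ (fun y => fderiv ℝ (fun y' => φ t y') y (EuclideanSpace.single j (1 : ℝ))) x
      (EuclideanSpace.single i (1 : ℝ))

/-- The row vector `pᵀσ ∈ ℝᵈ`. -/
def rowMul {n d : ℕ} (p : Eucl n) (M : Matrix (Fin n) (Fin d) ℝ) : Eucl d :=
  (WithLp.equiv 2 (Fin d → ℝ)).symm fun j => ∑ i, p i * M i j

/-- `φ ∈ C³_{l,b}([0,T]×ℝⁿ)`: three times continuously differentiable with all
derivatives of order 1 to 3 bounded. -/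
def IsTestFunction {n : ℕ} (φ : ℝ → Eucl n → ℝ) : Prop :=
  ContDiff ℝ 3 (fun p : ℝ × Eucl n => φ p.1 p.2) ∧
  ∀ i : ℕ, 1 ≤ i → i ≤ 3 →
    ∃ M : ℝ, ∀ p : ℝ × Eucl n,
      ‖iteratedFDeriv ℝ i (fun q : ℝ × Eucl n => φ q.1 q.2) p‖ ≤ M

/-- Viscosity subsolution of `∂_t w + G(t,x,w,Dw,D²w) = 0` on `[0,T)×ℝⁿ`
with terminal condition `w(T,·) = g`. -/
def IsViscositySubsolution {n : ℕ} (T : ℝ)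
    (G : ℝ → Eucl n → ℝ → Eucl n → Matrix (Fin n) (Fin n) ℝ → ℝ)
    (g : Eucl n → ℝ) (w : ℝ → Eucl n → ℝ) : Prop :=
  (∀ x : Eucl n, w T x ≤ g x) ∧
  ∀ φ : ℝ → Eucl n → ℝ, IsTestFunction φ →
    ∀ t ∈ Set.Ico (0 : ℝ) T, ∀ x : Eucl n,
      IsLocalMaxOn (fun p : ℝ × Eucl n => w p.1 p.2 - φ p.1 p.2)
        (Set.Icc (0 : ℝ) T ×ˢ (Set.univ : Set (Eucl n))) (t, x) →
      0 ≤ timeDeriv φ t x + G t x (φ t x) (spaceGrad φ t x) (spaceHess φ t x)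

/-- Viscosity supersolution of `∂_t w + G(t,x,w,Dw,D²w) = 0` on `[0,T)×ℝⁿ`
with terminal condition `w(T,·) = g`. -/
def IsViscositySupersolution {n : ℕ} (T : ℝ)
    (G : ℝ → Eucl n → ℝ → Eucl n → Matrix (Fin n) (Fin n) ℝ → ℝ)
    (g : Eucl n → ℝ) (w : ℝ → Eucl n → ℝ) : Prop :=
  (∀ x : Eucl n, g x ≤ w T x) ∧
  ∀ φ : ℝ → Eucl n → ℝ, IsTestFunction φ →
    ∀ t ∈ Set.Ico (0 : ℝ) T, ∀ x : Eucl n,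
      IsLocalMinOn (fun p : ℝ × Eucl n => w p.1 p.2 - φ p.1 p.2)
        (Set.Icc (0 : ℝ) T ×ˢ (Set.univ : Set (Eucl n))) (t, x) →
      timeDeriv φ t x + G t x (φ t x) (spaceGrad φ t x) (spaceHess φ t x) ≤ 0

/-- Viscosity solution: both a sub- and a supersolution. -/
def IsViscositySolution {n : ℕ} (T : ℝ)
    (G : ℝ → Eucl n → ℝ → Eucl n → Matrix (Fin n) (Fin n) ℝ → ℝ)
    (g : Eucl n → ℝ) (w : ℝ → Eucl n → ℝ) : Prop :=
  IsViscositySubsolution T G g w ∧ IsViscositySupersolution T G g w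

/-- The lower Hamiltonian `H⁻`. -/
def lowerHamiltonian {n d : ℕ} {U V : Type*}
    (b : ℝ → Eucl n → U → V → Eucl n)
    (σ : ℝ → Eucl n → U → V → Matrix (Fin n) (Fin d) ℝ)
    (f : ℝ → Eucl n → ℝ → Eucl d → U → V → ℝ)
    (t : ℝ) (x : Eucl n) (y : ℝ) (p : Eucl n) (X : Matrix (Fin n) (Fin n) ℝ) : ℝ :=
  ⨆ u : U, ⨅ v : V,
    (1 / 2) * Matrix.trace (σ t x u v * (σ t x u v)ᵀ * X)
      + ⟪p, b t x u v⟫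
      + f t x y (rowMul p (σ t x u v)) u v

/-- The upper Hamiltonian `H⁺`. -/
def upperHamiltonian {n d : ℕ} {U V : Type*}
    (b : ℝ → Eucl n → U → V → Eucl n)
    (σ : ℝ → Eucl n → U → V → Matrix (Fin n) (Fin d) ℝ)
    (f : ℝ → Eucl n → ℝ → Eucl d → U → V → ℝ)
    (t : ℝ) (x : Eucl n) (y : ℝ) (p : Eucl n) (X : Matrix (Fin n) (Fin n) ℝ) : ℝ :=
  ⨅ v : V, ⨆ u : U,
    (1 / 2) * Matrix.trace (σ t x u v * (σ t x u v)ᵀ * X)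
      + ⟪p, b t x u v⟫
      + f t x y (rowMul p (σ t x u v)) u v

/-- Membership in the class `Θ` of continuous functions on `[0,T]×ℝⁿ` satisfying the
growth condition `φ(t,x)·exp{−Ã[log((|x|²+1)^{1/2})]²} → 0` as `|x| → ∞`,
uniformly in `t ∈ [0,T]`. -/
def MemTheta {n : ℕ} (T : ℝ) (φ : ℝ → Eucl n → ℝ) : Prop :=
  ContinuousOn (fun p : ℝ × Eucl n => φ p.1 p.2)
      (Set.Icc (0 : ℝ) T ×ˢ (Set.univ : Set (Eucl n))) ∧
  ∃ A : ℝ, 0 < A ∧ ∀ ε > (0 : ℝ), ∃ R : ℝ, ∀ t ∈ Set.Icc (0 : ℝ) T, ∀ x : Eucl n,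
    R ≤ ‖x‖ →
      |φ t x| * Real.exp (-A * (Real.log ((‖x‖ ^ 2 + 1) ^ ((1 : ℝ) / 2))) ^ 2) ≤ ε

section Alexandrov

open MeasureTheory Filter Topology

variable {F : Type*} [NormedAddCommGroup F] [InnerProductSpace ℝ F] [FiniteDimensional ℝ F]

/-- Given a Lipschitz map `P` on `S` and a Lipschitz map `Q` on `S`, there are arbitrarily small
vectors `p` all of whose `Q`-preimages in `S` are differentiability points of `P`. -/
lemma exists_small_forall_differentiableWithinAt {S : Set F} {P Q : F → F} {C C' : NNReal}
    (hP : LipschitzOnWith C P S) (hQ : LipschitzOnWith C' Q S) {r : ℝ} (hr : 0 < r) :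
    ∃ p : F, ‖p‖ < r ∧ ∀ w ∈ S, Q w = p → DifferentiableWithinAt ℝ P S w := by
  let _ : MeasurableSpace F := borel F
  have _ : BorelSpace F := ⟨rfl⟩
  let μ : Measure F := μH[Module.finrank ℝ F]
  let N : Set F := {w | w ∈ S ∧ ¬ DifferentiableWithinAt ℝ P S w}
  have hN : μ N = 0 := by
    have h := hP.ae_differentiableWithinAt_of_mem (μ := μ)
    rw [ae_iff] at h
    convert h using 2
    ext w
    simp [N]
  have hQN : μ (Q '' N) = 0 := by
    have hsub : N ⊆ S := fun w hw => hw.1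
    have h := (hQ.mono hsub).hausdorffMeasure_image_le (d := Module.finrank ℝ F) (by positivity)
    rw [show μH[(Module.finrank ℝ F : ℝ)] N = 0 from hN, mul_zero] at h
    exact le_antisymm h zero_le
  have hball : 0 < μ (Metric.ball (0 : F) r) := Metric.measure_ball_pos μ 0 hr
  have hne : (Metric.ball (0 : F) r \ Q '' N).Nonempty := by
    rw [Set.sdiff_nonempty]
    intro hsub
    exact hball.ne' (measure_mono_null hsub hQN)
  obtain ⟨p, hp, hpN⟩ := hne
  refine ⟨p, by simpa using hp, fun w hw hwp => ?_⟩
  by_contra hd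
  exact hpN ⟨w, ⟨hw, hd⟩, hwp⟩

/-- If the linear form `⟪v, ·⟫` is dominated by a quadratic, then `v = 0`. -/
lemma eq_zero_of_inner_le_sq {E : Type*} [NormedAddCommGroup E] [InnerProductSpace ℝ E]
    {v : E} {K : ℝ} (h : ∀ x : E, ⟪v, x⟫ ≤ K * ‖x‖ ^ 2) : v = 0 := by
  by_contra hv
  have hv' : 0 < ‖v‖ ^ 2 := by positivity
  have h1 := h ((1 / (2 * (|K| + 1))) • v)
  rw [inner_smul_right, real_inner_self_eq_norm_sq, norm_smul, mul_pow] at h1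
  have hK : K ≤ |K| := le_abs_self K
  have hK0 : 0 ≤ |K| := abs_nonneg K
  set s := 1 / (2 * (|K| + 1)) with hs
  have hs0 : 0 < s := by positivity
  have hs1 : s * (2 * (|K| + 1)) = 1 := by rw [hs]; field_simp
  rw [Real.norm_eq_abs, sq_abs] at h1
  have h2 : K * (s ^ 2 * ‖v‖ ^ 2) ≤ |K| * (s ^ 2 * ‖v‖ ^ 2) := by gcongr
  have h3 : s * ‖v‖ ^ 2 * 1 ≤ s * ‖v‖ ^ 2 * (|K| * s) := by nlinarith
  have h4 := le_of_mul_le_mul_left h3 (by positivity)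
  nlinarith

/-- A function on `[0,1]` whose increments are `O(e)` times the step, up to second order, has total
increment at most `e`. -/
lemma abs_sub_le_of_increment_le {ψ : ℝ → ℝ} {e c : ℝ}
    (h : ∀ s ∈ Set.Icc (0 : ℝ) 1, ∀ t ∈ Set.Icc (0 : ℝ) 1, s ≤ t →
      |ψ t - ψ s| ≤ (t - s) * (e + c * (t - s))) : |ψ 1 - ψ 0| ≤ e := by
  have key : ∀ N : ℕ, 0 < N → |ψ 1 - ψ 0| ≤ e + c * (1 / N) := by
    intro N hN
    have hN' : (0 : ℝ) < N := by exact_mod_cast hN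
    have hk : ∀ k : ℕ, k ≤ N → |ψ (k / N) - ψ 0| ≤ k * (1 / N * (e + c * (1 / N))) := by
      intro k
      induction k with
      | zero => intro _; simp
      | succ k ih =>
        intro hk
        have hkN : ((k : ℝ) + 1) ≤ N := by exact_mod_cast hk
        have h1 := ih (by omega)
        have h2 := h (k / N) ⟨by positivity, by rw [div_le_one hN']; linarith⟩
          ((k + 1 : ℕ) / N) ⟨by positivity, by rw [div_le_one hN']; push_cast; linarith⟩
          (by push_cast; gcongr; linarith)
        have h3 : ((k + 1 : ℕ) : ℝ) / N - k / N = 1 / N := by push_cast; ring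
        rw [h3] at h2
        calc |ψ ((k + 1 : ℕ) / N) - ψ 0|
            ≤ |ψ ((k + 1 : ℕ) / N) - ψ (k / N)| + |ψ (k / N) - ψ 0| := abs_sub_le _ _ _
          _ ≤ ((k + 1 : ℕ) : ℝ) * (1 / N * (e + c * (1 / N))) := by
            rw [show ((k + 1 : ℕ) : ℝ) = k + 1 by push_cast; rfl] at h2 ⊢
            linarith
    have h1 := hk N le_rfl
    rw [div_self hN'.ne'] at h1
    calc _ ≤ _ := h1
      _ = _ := by field_simp
  have hlim : Tendsto (fun N : ℕ => e + c * (1 / (N : ℝ))) atTop (𝓝 (e + c * 0)) :=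
    tendsto_const_nhds.add (tendsto_one_div_atTop_nhds_zero_nat.const_mul c)
  have := ge_of_tendsto hlim (eventually_atTop.2 ⟨1, fun N hN => key N hN⟩)
  simpa using this

/-- If a subgradient selection `ζ` of `f` is differentiable at `z₀`, then `f` has the corresponding
second order expansion at `z₀`. -/
lemma second_order_of_hasFDerivAt_subgradient {E : Type*} [NormedAddCommGroup E]
    [InnerProductSpace ℝ E] {f : E → ℝ} {ζ : E → E}
    (hζ : ∀ z z', f z + ⟪ζ z, z' - z⟫ ≤ f z') {z₀ : E} {A : E →L[ℝ] E}
    (hA : HasFDerivAt ζ A z₀) {ε : ℝ} (hε : 0 < ε) :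
    ∃ δ > 0, ∀ h : E, ‖h‖ < δ →
      |f (z₀ + h) - f z₀ - ⟪ζ z₀, h⟫ - (1 / 2) * ⟪A h, h⟫| ≤ ε * ‖h‖ ^ 2 := by
  have h1 := (hasFDerivAt_iff_isLittleO_nhds_zero.1 hA).def hε
  obtain ⟨δ, hδ, h2⟩ := Metric.eventually_nhds_iff.1 h1
  refine ⟨δ, hδ, fun h hh => ?_⟩
  have h3 : ∀ t ∈ Set.Icc (0 : ℝ) 1,
      |⟪ζ (z₀ + t • h), h⟫ - ⟪ζ z₀, h⟫ - t * ⟪A h, h⟫| ≤ ε * ‖h‖ ^ 2 := by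
    intro t ht
    have hn : ‖t • h‖ ≤ ‖h‖ := by
      rw [norm_smul, Real.norm_eq_abs, abs_of_nonneg ht.1]
      exact mul_le_of_le_one_left (norm_nonneg _) ht.2
    have h4 := h2 (y := t • h) (by simpa using lt_of_le_of_lt hn hh)
    have h5 : ⟪ζ (z₀ + t • h), h⟫ - ⟪ζ z₀, h⟫ - t * ⟪A h, h⟫
        = ⟪ζ (z₀ + t • h) - ζ z₀ - A (t • h), h⟫ := by
      simp [inner_sub_left, inner_smul_left]
    rw [h5]
    calc _ ≤ ‖ζ (z₀ + t • h) - ζ z₀ - A (t • h)‖ * ‖h‖ := abs_real_inner_le_norm _ _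
      _ ≤ (ε * ‖t • h‖) * ‖h‖ := by gcongr
      _ ≤ (ε * ‖h‖) * ‖h‖ := by gcongr
      _ = _ := by ring
  set a := ⟪ζ z₀, h⟫ with ha
  set b := ⟪A h, h⟫ with hb
  have key := abs_sub_le_of_increment_le
    (ψ := fun t => f (z₀ + t • h) - t * a - (1 / 2) * b * t ^ 2) (e := ε * ‖h‖ ^ 2) (c := |b|) (by
    intro s hs t ht hst
    have e1 := hζ (z₀ + s • h) (z₀ + t • h)
    have e2 := hζ (z₀ + t • h) (z₀ + s • h)
    have e3 : (z₀ + t • h) - (z₀ + s • h) = (t - s) • h := by module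
    have e4 : (z₀ + s • h) - (z₀ + t • h) = (s - t) • h := by module
    rw [e3, inner_smul_right] at e1
    rw [e4, inner_smul_right] at e2
    have f1 := abs_le.1 (h3 s hs)
    have f2 := abs_le.1 (h3 t ht)
    have hts : 0 ≤ t - s := by linarith
    have g1 := mul_le_mul_of_nonneg_left f1.1 hts
    have g2 := mul_le_mul_of_nonneg_left f2.2 hts
    have g3 := mul_le_mul_of_nonneg_left (le_abs_self b) (mul_nonneg hts hts)
    have g4 := mul_le_mul_of_nonneg_left (neg_abs_le b) (mul_nonneg hts hts)
    have g5 := mul_nonneg (mul_nonneg hts hts) (abs_nonneg b)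
    rw [abs_le]
    constructor <;> nlinarith)
  simp only [one_smul, zero_smul, add_zero] at key
  convert key using 2
  ring

/-- **Alexandrov–Jensen lemma.** Let `f` be a convex function given with a bounded subgradient
selection `ζ`. For arbitrarily small `p`, at every global maximum point of
`f z - ⟪B z, z⟫ / 2 + ⟪p, z⟫` the selection `ζ` is differentiable. -/
lemma exists_small_perturbation_hasFDerivAt {f : F → ℝ} {ζ : F → F}
    (hζ : ∀ z z', f z + ⟪ζ z, z' - z⟫ ≤ f z') (B : F →L[ℝ] F)
    (hB : ∀ x y, ⟪B x, y⟫ = ⟪x, B y⟫) {r : ℝ} (hr : 0 < r) :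
    ∃ p : F, ‖p‖ < r ∧ ∀ z₀,
      (∀ z, f z - (1 / 2) * ⟪B z, z⟫ + ⟪p, z⟫ ≤ f z₀ - (1 / 2) * ⟪B z₀, z₀⟫ + ⟪p, z₀⟫) →
      p = B z₀ - ζ z₀ ∧ (∀ h, f (z₀ + h) ≤ f z₀ + ⟪ζ z₀, h⟫ + (1 / 2) * ⟪B h, h⟫) ∧
      ∃ A : F →L[ℝ] F, HasFDerivAt ζ A z₀ := by
  classical
  let w : F → F := fun z => z + ζ z
  let S : Set F := Set.range w
  have mono : ∀ z z', 0 ≤ ⟪ζ z - ζ z', z - z'⟫ := by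
    intro z z'
    have h1 := hζ z z'
    have h2 := hζ z' z
    have h3 : ⟪ζ z, z' - z⟫ = -⟪ζ z, z - z'⟫ := by rw [← inner_neg_right, neg_sub]
    rw [inner_sub_left]
    linarith
  have hexp : ∀ z z', ‖z - z'‖ ≤ ‖w z - w z'‖ := by
    intro z z'
    have h1 : w z - w z' = (z - z') + (ζ z - ζ z') := by simp only [w]; abel
    have h2 := mono z z'
    have h3 : ‖w z - w z'‖ ^ 2
        = ‖z - z'‖ ^ 2 + 2 * ⟪ζ z - ζ z', z - z'⟫ + ‖ζ z - ζ z'‖ ^ 2 := by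
      rw [h1, norm_add_sq_real, real_inner_comm]
    refine le_of_sq_le_sq ?_ (norm_nonneg _)
    nlinarith [sq_nonneg ‖ζ z - ζ z'‖]
  have hinj : Function.Injective w := by
    intro z z' h
    have := hexp z z'
    rw [h, sub_self, norm_zero] at this
    exact sub_eq_zero.1 (norm_le_zero_iff.1 this)
  let P : F → F := Function.invFun w
  have hP : ∀ z, P (w z) = z := Function.leftInverse_invFun hinj
  have hPL : LipschitzOnWith 1 P S := by
    refine LipschitzOnWith.of_dist_le_mul ?_
    rintro _ ⟨z, rfl⟩ _ ⟨z', rfl⟩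
    rw [hP, hP, dist_eq_norm, dist_eq_norm]
    simpa using hexp z z'
  let Q : F → F := fun x => B (P x) + P x - x
  have hQL : LipschitzOnWith (‖B‖₊ * 1 + 1 + 1) Q S := by
    have h1 : LipschitzOnWith (‖B‖₊ * 1) (fun x => B (P x)) S :=
      B.lipschitz.comp_lipschitzOnWith hPL
    exact (h1.add hPL).sub (LipschitzWith.id.lipschitzOnWith)
  obtain ⟨p, hpr, hp⟩ := exists_small_forall_differentiableWithinAt hPL hQL hr
  refine ⟨p, hpr, fun z₀ hmax => ?_⟩
  have hBK : ∀ h, ⟪B h, h⟫ ≤ ‖B‖ * ‖h‖ ^ 2 := by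
    intro h
    calc ⟪B h, h⟫ ≤ ‖B h‖ * ‖h‖ := real_inner_le_norm _ _
      _ ≤ (‖B‖ * ‖h‖) * ‖h‖ := by gcongr; exact B.le_opNorm h
      _ = _ := by ring
  have hexpand : ∀ h, ⟪B (z₀ + h), z₀ + h⟫ = ⟪B z₀, z₀⟫ + 2 * ⟪B z₀, h⟫ + ⟪B h, h⟫ := by
    intro h
    rw [map_add, inner_add_left, inner_add_right, inner_add_right, hB h z₀,
      real_inner_comm (B z₀) h]
    ring
  have hupper : ∀ h, f (z₀ + h) ≤ f z₀ + ⟪B z₀ - p, h⟫ + (1 / 2) * ⟪B h, h⟫ := by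
    intro h
    have h1 := hmax (z₀ + h)
    rw [hexpand, inner_add_right] at h1
    rw [inner_sub_left]
    linarith
  have hp_eq : p = B z₀ - ζ z₀ := by
    have h0 : ζ z₀ - (B z₀ - p) = 0 := by
      refine eq_zero_of_inner_le_sq (K := (1 / 2) * ‖B‖) fun x => ?_
      have h1 := hζ z₀ (z₀ + x)
      have h2 := hupper x
      have h3 := hBK x
      rw [add_sub_cancel_left] at h1
      rw [inner_sub_left]
      linarith
    have h1 := sub_eq_zero.1 h0
    rw [h1]; abel
  have hupper' : ∀ h, f (z₀ + h) ≤ f z₀ + ⟪ζ z₀, h⟫ + (1 / 2) * ⟪B h, h⟫ := by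
    intro h
    have := hupper h
    rwa [hp_eq, sub_sub_cancel] at this
  refine ⟨hp_eq, hupper', ?_⟩
  have hQ0 : Q (w z₀) = p := by
    simp only [Q, hP, w, hp_eq]; abel
  obtain ⟨L, hL⟩ := hp (w z₀) ⟨z₀, rfl⟩ hQ0
  -- the selection is Lipschitz at `z₀`
  have hlip : ∀ h, ‖ζ (z₀ + h) - ζ z₀‖ ≤ 2 * ‖B‖ * ‖h‖ := by
    intro h
    by_cases hd : ζ (z₀ + h) - ζ z₀ = 0
    · rw [hd, norm_zero]; positivity
    set v := ζ (z₀ + h) - ζ z₀ with hv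
    have hvn : 0 < ‖v‖ := norm_pos_iff.2 hd
    let k : F := (‖h‖ / ‖v‖) • v
    have hk : ‖k‖ = ‖h‖ := by
      rw [norm_smul, norm_div, norm_norm, norm_norm, div_mul_cancel₀ _ hvn.ne']
    have h1 := hζ (z₀ + h) (z₀ + h + k)
    have h2 := hζ z₀ (z₀ + h)
    have h3 := hupper' (h + k)
    have h4 := hBK (h + k)
    have h5 : ‖h + k‖ ≤ 2 * ‖h‖ := (norm_add_le _ _).trans (by rw [hk]; linarith)
    have h6 : ‖h + k‖ ^ 2 ≤ 4 * ‖h‖ ^ 2 := by nlinarith [norm_nonneg (h + k)]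
    have h7 : ‖B‖ * ‖h + k‖ ^ 2 ≤ ‖B‖ * (4 * ‖h‖ ^ 2) := by gcongr
    have h8 : ⟪v, k⟫ = ‖h‖ * ‖v‖ := by
      simp only [k]
      rw [inner_smul_right, real_inner_self_eq_norm_sq]
      field_simp
    rw [add_sub_cancel_left] at h1 h2
    rw [← add_assoc, inner_add_right] at h3
    have h9 : ⟪v, k⟫ = ⟪ζ (z₀ + h), k⟫ - ⟪ζ z₀, k⟫ := by rw [hv, inner_sub_left]
    have h10 : ‖h‖ * ‖v‖ ≤ ‖h‖ * (2 * ‖B‖ * ‖h‖) := by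
      rw [← h8, h9]
      nlinarith
    rcases eq_or_lt_of_le (norm_nonneg h) with h0 | h0
    · have hh : h = 0 := norm_eq_zero.1 h0.symm
      exact absurd (by rw [hv, hh, add_zero, sub_self]) hd
    · exact le_of_mul_le_mul_left h10 h0
  have hwO : ∀ h, ‖w (z₀ + h) - w z₀‖ ≤ (1 + 2 * ‖B‖) * ‖h‖ := by
    intro h
    have h1 : w (z₀ + h) - w z₀ = h + (ζ (z₀ + h) - ζ z₀) := by simp only [w]; abel
    rw [h1]
    have := norm_add_le h (ζ (z₀ + h) - ζ z₀)
    have := hlip h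
    linarith
  have hwt : Tendsto w (𝓝 z₀) (𝓝[S] (w z₀)) := by
    refine tendsto_nhdsWithin_iff.2 ⟨?_, Eventually.of_forall fun z => ⟨z, rfl⟩⟩
    rw [tendsto_iff_norm_sub_tendsto_zero]
    have h1 : Tendsto (fun z => (1 + 2 * ‖B‖) * ‖z - z₀‖) (𝓝 z₀) (𝓝 0) := by
      have : Continuous fun z => (1 + 2 * ‖B‖) * ‖z - z₀‖ := by fun_prop
      simpa using this.tendsto z₀
    refine squeeze_zero (fun _ => norm_nonneg _) (fun z => ?_) h1
    have := hwO (z - z₀)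
    rwa [add_sub_cancel] at this
  have hlin : (fun h => h - L (w (z₀ + h) - w z₀)) =o[𝓝 0] fun h => h := by
    have h1 := hL.isLittleO
    have hz : Tendsto (fun h : F => z₀ + h) (𝓝 0) (𝓝 z₀) := by
      have : Continuous fun h : F => z₀ + h := by fun_prop
      simpa using this.tendsto 0
    have h2 := h1.comp_tendsto (hwt.comp hz)
    have h3 : (fun h => w (z₀ + h) - w z₀) =O[𝓝 0] fun h : F => h :=
      Asymptotics.IsBigO.of_bound _ (Eventually.of_forall hwO)
    have h4 := h2.trans_isBigO h3
    refine h4.congr_left fun h => ?_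
    simp [Function.comp, hP]
  have hsurj : Function.Surjective L := by
    intro e
    have hcl : IsClosed (LinearMap.range (L : F →ₗ[ℝ] F) : Set F) :=
      Submodule.closed_of_finiteDimensional _
    have hmem : e ∈ closure (LinearMap.range (L : F →ₗ[ℝ] F) : Set F) := by
      rw [Metric.mem_closure_iff]
      intro ε hε
      have h1 := hlin.def (c := ε / (2 * (‖e‖ + 1))) (by positivity)
      obtain ⟨δ, hδ, h2⟩ := Metric.eventually_nhds_iff.1 h1
      let t : ℝ := δ / (2 * (‖e‖ + 1))
      have ht : 0 < t := by positivity
      have h3 := h2 (y := t • e) (by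
        rw [dist_zero_right, norm_smul, Real.norm_of_nonneg ht.le]
        simp only [t]
        rw [div_mul_eq_mul_div, div_lt_iff₀ (by positivity)]
        nlinarith [norm_nonneg e])
      refine ⟨L (t⁻¹ • (w (z₀ + t • e) - w z₀)), ⟨_, rfl⟩, ?_⟩
      have h4 : e - L (t⁻¹ • (w (z₀ + t • e) - w z₀))
          = t⁻¹ • (t • e - L (w (z₀ + t • e) - w z₀)) := by
        rw [map_smul, smul_sub, smul_smul, inv_mul_cancel₀ ht.ne', one_smul]
      rw [dist_eq_norm, h4, norm_smul, norm_inv, Real.norm_of_nonneg ht.le]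
      rw [norm_smul, Real.norm_of_nonneg ht.le] at h3
      calc t⁻¹ * ‖t • e - L (w (z₀ + t • e) - w z₀)‖
          ≤ t⁻¹ * (ε / (2 * (‖e‖ + 1)) * (t * ‖e‖)) := by gcongr
        _ = ε * (‖e‖ / (2 * (‖e‖ + 1))) := by field_simp
        _ < ε * 1 := by
          gcongr
          rw [div_lt_one (by positivity)]
          linarith [norm_nonneg e]
        _ = ε := mul_one ε
    rw [hcl.closure_eq] at hmem
    exact hmem
  have hinjL : Function.Injective L :=
    (LinearMap.injective_iff_surjective (f := (L : F →ₗ[ℝ] F))).2 hsurj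
  let Le : F ≃L[ℝ] F :=
    (LinearEquiv.ofBijective (L : F →ₗ[ℝ] F) ⟨hinjL, hsurj⟩).toContinuousLinearEquiv
  have hLe : (Le : F →L[ℝ] F) = L := by ext x; rfl
  have hw' : HasFDerivWithinAt w (Le.symm : F →L[ℝ] F) Set.univ z₀ :=
    HasFDerivWithinAt.of_local_left_inverse (t := S) (by rwa [nhdsWithin_univ])
      (by rw [hLe]; exact hL) (Set.mem_univ _) (Eventually.of_forall hP)
  rw [hasFDerivWithinAt_univ] at hw'
  refine ⟨(Le.symm : F →L[ℝ] F) - ContinuousLinearMap.id ℝ F, ?_⟩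
  have := hw'.sub (hasFDerivAt_id z₀)
  refine this.congr_of_eventuallyEq (Eventually.of_forall fun z => ?_)
  simp [w]

end Alexandrov

section Sums

open Filter Topology

variable {E : Type*} [NormedAddCommGroup E] [InnerProductSpace ℝ E]

/-- The Legendre-type transform of a continuous function on a compact set is convex, with a
subgradient selection given by a maximizer. -/
lemma exists_legendre_selection {K : Set E} (hK : IsCompact K) (hne : K.Nonempty) {u : E → ℝ}
    (hu : ContinuousOn u K) :
    ∃ (f : E → ℝ) (ζ : E → E), (∀ x, ζ x ∈ K) ∧
      (∀ x, f x = u (ζ x) - (1 / 2) * ‖ζ x‖ ^ 2 + ⟪ζ x, x⟫) ∧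
      ∀ x, ∀ ξ ∈ K, u ξ - (1 / 2) * ‖ξ‖ ^ 2 + ⟪ξ, x⟫ ≤ f x := by
  have h : ∀ x : E, ∃ ξ ∈ K, IsMaxOn (fun ξ => u ξ - (1 / 2) * ‖ξ‖ ^ 2 + ⟪ξ, x⟫) K ξ := by
    intro x
    refine hK.exists_isMaxOn hne ?_
    exact (hu.sub (by fun_prop)).add (by fun_prop)
  choose ζ hζ hmax using h
  exact ⟨fun x => u (ζ x) - (1 / 2) * ‖ζ x‖ ^ 2 + ⟪ζ x, x⟫, ζ, hζ, fun _ => rfl,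
    fun x ξ hξ => hmax x hξ⟩

/-- Existence of a maximizer of a convex function with bounded subgradients minus a coercive
quadratic form, plus a linear form. -/
lemma exists_max_sub_quadratic [FiniteDimensional ℝ E] {f : E → ℝ} {ζ : E → E} {ρ : ℝ}
    (hζ : ∀ z z', f z + ⟪ζ z, z' - z⟫ ≤ f z') (hρ : ∀ z, ‖ζ z‖ ≤ ρ)
    (B : E →L[ℝ] E) (hB : ∀ z, ‖z‖ ^ 2 ≤ ⟪B z, z⟫) (p : E) :
    ∃ z₀, ∀ z, f z - (1 / 2) * ⟪B z, z⟫ + ⟪p, z⟫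
      ≤ f z₀ - (1 / 2) * ⟪B z₀, z₀⟫ + ⟪p, z₀⟫ := by
  have hρ0 : 0 ≤ ρ := (norm_nonneg _).trans (hρ 0)
  have hf : LipschitzWith ρ.toNNReal f := by
    refine LipschitzWith.of_le_add_mul _ fun z z' => ?_
    have h1 := hζ z z'
    have h2 : -(‖ζ z‖ * ‖z' - z‖) ≤ ⟪ζ z, z' - z⟫ := by
      have := abs_le.1 (abs_real_inner_le_norm (ζ z) (z' - z))
      exact this.1
    have h3 : ‖ζ z‖ * ‖z' - z‖ ≤ ρ * ‖z' - z‖ := by gcongr; exact hρ z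
    rw [dist_comm, dist_eq_norm]
    rw [Real.coe_toNNReal _ hρ0]
    linarith
  have hc : Continuous fun z => f z - (1 / 2) * ⟪B z, z⟫ + ⟪p, z⟫ := by
    have := hf.continuous
    fun_prop
  refine hc.exists_forall_ge' 0 ?_
  filter_upwards [(tendsto_norm_cocompact_atTop (E := E)).eventually_ge_atTop
    (2 * (ρ + ‖p‖))] with z hz
  have h1 := hζ z 0
  have h2 : ⟪ζ z, z⟫ ≤ ρ * ‖z‖ :=
    (real_inner_le_norm _ _).trans (by gcongr; exact hρ z)
  have h3 := real_inner_le_norm p z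
  have h4 := hB z
  have h5 : 2 * (ρ + ‖p‖) * ‖z‖ ≤ ‖z‖ * ‖z‖ := by gcongr
  rw [zero_sub, inner_neg_right] at h1
  simp only [map_zero, inner_zero_right]
  nlinarith

/-- Partial maximization over the regularization variables. -/
lemma sixth_sq_le {E : Type*} [SeminormedAddCommGroup E] (x y ξ η : E) :
    (1 / 6) * ‖ξ - η‖ ^ 2
      ≤ (1 / 2) * ‖x - ξ‖ ^ 2 + (1 / 2) * ‖y - η‖ ^ 2 + (1 / 2) * ‖x - y‖ ^ 2 := by
  have h1 : ‖ξ - η‖ ≤ ‖x - ξ‖ + ‖x - y‖ + ‖y - η‖ := by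
    have : ξ - η = -(x - ξ) + (x - y) + (y - η) := by abel
    rw [this]
    refine (norm_add₃_le).trans ?_
    rw [norm_neg]
  have h2 : ‖ξ - η‖ ^ 2 ≤ (‖x - ξ‖ + ‖x - y‖ + ‖y - η‖) ^ 2 := by gcongr
  nlinarith [sq_nonneg (‖x - ξ‖ - ‖x - y‖), sq_nonneg (‖x - ξ‖ - ‖y - η‖),
    sq_nonneg (‖x - y‖ - ‖y - η‖)]

lemma legendre_eq (x ξ : E) :
    (1 / 2) * ‖ξ‖ ^ 2 - ⟪ξ, x⟫ + (1 / 2) * ‖x‖ ^ 2 = (1 / 2) * ‖x - ξ‖ ^ 2 := by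
  rw [norm_sub_sq_real, real_inner_comm]; ring

/-- The quadratic form `‖x‖² + ‖y‖² + ‖x - y‖²` on `E × E`, as an operator. -/
def sumOperator (E : Type*) [NormedAddCommGroup E] [InnerProductSpace ℝ E]
    [FiniteDimensional ℝ E] : WithLp 2 (E × E) →L[ℝ] WithLp 2 (E × E) :=
  LinearMap.toContinuousLinearMap
    { toFun := fun z => WithLp.toLp 2 ((2 : ℝ) • z.fst - z.snd, (2 : ℝ) • z.snd - z.fst)
      map_add' := fun z z' => by
        refine WithLp.ofLp_injective 2 (Prod.ext ?_ ?_) <;> simp <;> abel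
      map_smul' := fun c z => by
        refine WithLp.ofLp_injective 2 (Prod.ext ?_ ?_) <;> simp <;> module }

variable [FiniteDimensional ℝ E]

lemma sumOperator_fst (z : WithLp 2 (E × E)) :
    (sumOperator E z).fst = (2 : ℝ) • z.fst - z.snd := rfl

lemma sumOperator_snd (z : WithLp 2 (E × E)) :
    (sumOperator E z).snd = (2 : ℝ) • z.snd - z.fst := rfl

lemma sumOperator_symm (z z' : WithLp 2 (E × E)) :
    ⟪sumOperator E z, z'⟫ = ⟪z, sumOperator E z'⟫ := by
  simp only [WithLp.prod_inner_apply, WithLp.ofLp_fst, WithLp.ofLp_snd, sumOperator_fst,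
    sumOperator_snd, inner_sub_left, inner_sub_right, inner_smul_left, inner_smul_right]
  simp
  ring

lemma inner_sumOperator_self (z : WithLp 2 (E × E)) :
    ⟪sumOperator E z, z⟫ = ‖z.fst‖ ^ 2 + ‖z.snd‖ ^ 2 + ‖z.fst - z.snd‖ ^ 2 := by
  simp only [WithLp.prod_inner_apply, WithLp.ofLp_fst, WithLp.ofLp_snd, sumOperator_fst,
    sumOperator_snd, inner_sub_left, inner_smul_left, norm_sub_sq_real,
    real_inner_self_eq_norm_sq]
  rw [real_inner_comm z.fst z.snd]
  simp
  ring

set_option maxHeartbeats 1000000 in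
/-- **Theorem on sums** for two functions on a compact set, with quadratic penalization
`‖ξ - η‖² / 6`. -/
theorem theorem_on_sums {K : Set E} (hK : IsCompact K) (hne : K.Nonempty) {u v : E → ℝ}
    (hu : ContinuousOn u K) (hv : ContinuousOn v K) {r : ℝ} (hr : 0 < r) :
    ∃ ξ ∈ K, ∃ η ∈ K, ∃ (q q' : E) (X Y : E →L[ℝ] E), ∃ δ > 0,
      ‖q - (1 / 3 : ℝ) • (ξ - η)‖ ≤ r ∧ ‖q' - (1 / 3 : ℝ) • (ξ - η)‖ ≤ r ∧
      (∀ ξ' ∈ K, ∀ η' ∈ K, u ξ' - v η' - (1 / 6) * ‖ξ' - η'‖ ^ 2 - r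
        ≤ u ξ - v η - (1 / 6) * ‖ξ - η‖ ^ 2) ∧
      (∀ h, ‖h‖ < δ → ξ + h ∈ K →
        u (ξ + h) ≤ u ξ + ⟪q, h⟫ + (1 / 2) * ⟪X h, h⟫ + r * ‖h‖ ^ 2) ∧
      (∀ h, ‖h‖ < δ → η + h ∈ K →
        v η + ⟪q', h⟫ + (1 / 2) * ⟪Y h, h⟫ - r * ‖h‖ ^ 2 ≤ v (η + h)) ∧
      ∀ h k, ⟪X h, h⟫ - ⟪Y k, k⟫ ≤ ‖h - k‖ ^ 2 := by
  obtain ⟨f₁, ζ₁, hζ₁K, hf₁, hm₁⟩ := exists_legendre_selection hK hne hu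
  obtain ⟨f₂, ζ₂, hζ₂K, hf₂, hm₂⟩ := exists_legendre_selection (u := fun x => -v x) hK hne hv.neg
  obtain ⟨ρ, hρ0, hρ⟩ : ∃ ρ > 0, ∀ x ∈ K, ‖x‖ ≤ ρ := hK.isBounded.exists_pos_norm_le
  have hs₁ : ∀ x x', f₁ x + ⟪ζ₁ x, x' - x⟫ ≤ f₁ x' := by
    intro x x'
    have := hm₁ x' _ (hζ₁K x)
    rw [hf₁ x, inner_sub_right]; linarith
  have hs₂ : ∀ x x', f₂ x + ⟪ζ₂ x, x' - x⟫ ≤ f₂ x' := by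
    intro x x'
    have := hm₂ x' _ (hζ₂K x)
    rw [hf₂ x, inner_sub_right]; linarith
  let f : WithLp 2 (E × E) → ℝ := fun z => f₁ z.fst + f₂ z.snd
  let ζ : WithLp 2 (E × E) → WithLp 2 (E × E) := fun z => WithLp.toLp 2 (ζ₁ z.fst, ζ₂ z.snd)
  have hζ : ∀ z z', f z + ⟪ζ z, z' - z⟫ ≤ f z' := by
    intro z z'
    have h1 := hs₁ z.fst z'.fst
    have h2 := hs₂ z.snd z'.snd
    simp only [f, ζ, WithLp.prod_inner_apply]
    simp only [WithLp.ofLp_fst, WithLp.ofLp_snd, WithLp.sub_fst, WithLp.sub_snd]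
    linarith
  have norm_le : ∀ z : WithLp 2 (E × E), ‖z‖ ≤ ‖z.fst‖ + ‖z.snd‖ := by
    intro z
    have h := WithLp.prod_norm_sq_eq_of_L2 z
    refine le_of_sq_le_sq ?_ (by positivity)
    rw [h]; nlinarith [norm_nonneg z.fst, norm_nonneg z.snd]
  have fst_le : ∀ z : WithLp 2 (E × E), ‖z.fst‖ ≤ ‖z‖ := by
    intro z
    have h := WithLp.prod_norm_sq_eq_of_L2 z
    exact le_of_sq_le_sq (by nlinarith [sq_nonneg ‖z.snd‖]) (by positivity)
  have snd_le : ∀ z : WithLp 2 (E × E), ‖z.snd‖ ≤ ‖z‖ := by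
    intro z
    have h := WithLp.prod_norm_sq_eq_of_L2 z
    exact le_of_sq_le_sq (by nlinarith [sq_nonneg ‖z.fst‖]) (by positivity)
  have hζρ : ∀ z, ‖ζ z‖ ≤ 2 * ρ := by
    intro z
    have h1 := hρ _ (hζ₁K z.fst)
    have h2 := hρ _ (hζ₂K z.snd)
    have h3 := norm_le (ζ z)
    simp only [ζ, WithLp.toLp_fst, WithLp.toLp_snd] at h3 ⊢
    linarith
  have hBpos : ∀ z : WithLp 2 (E × E), ‖z‖ ^ 2 ≤ ⟪sumOperator E z, z⟫ := by
    intro z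
    rw [inner_sumOperator_self, WithLp.prod_norm_sq_eq_of_L2]
    nlinarith [sq_nonneg ‖z.fst - z.snd‖]
  set r' := min 1 (min (r / 2) (r / (2 * (8 * ρ + 8)))) with hr'
  have hr'0 : 0 < r' := by positivity
  have hr'1 : r' ≤ 1 := min_le_left _ _
  have hr'2 : r' ≤ r / 2 := (min_le_right _ _).trans (min_le_left _ _)
  have hr'3 : r' * (8 * ρ + 8) ≤ r := by
    have : r' ≤ r / (2 * (8 * ρ + 8)) := (min_le_right _ _).trans (min_le_right _ _)
    rw [le_div_iff₀ (by positivity)] at this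
    nlinarith
  obtain ⟨p, hpr, hp⟩ := exists_small_perturbation_hasFDerivAt hζ (sumOperator E)
    sumOperator_symm hr'0
  obtain ⟨z₀, hz₀⟩ := exists_max_sub_quadratic hζ hζρ (sumOperator E) hBpos p
  obtain ⟨hpe, hup, A, hA⟩ := hp z₀ hz₀
  have hr4 : 0 < r / 2 := by positivity
  obtain ⟨δ, hδ, hexp⟩ := second_order_of_hasFDerivAt_subgradient hζ hA hr
  set x := z₀.fst with hx
  set y := z₀.snd with hy
  set ξ := ζ₁ x with hξ
  set η := ζ₂ y with hη
  have hp1 : p.fst = (2 : ℝ) • x - y - ξ := by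
    rw [hpe]; rfl
  have hp2 : p.snd = (2 : ℝ) • y - x - η := by
    rw [hpe]; rfl
  have hp1n : ‖p.fst‖ ≤ r' := (fst_le p).trans hpr.le
  have hp2n : ‖p.snd‖ ≤ r' := (snd_le p).trans hpr.le
  let i₁ : E → WithLp 2 (E × E) := fun h => WithLp.toLp 2 (h, 0)
  let i₂ : E → WithLp 2 (E × E) := fun h => WithLp.toLp 2 (0, h)
  have i₁n : ∀ h, ‖i₁ h‖ = ‖h‖ := fun h => by
    simp [i₁]
  have i₂n : ∀ h, ‖i₂ h‖ = ‖h‖ := fun h => by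
    simp [i₂]
  let j₁ : E →ₗ[ℝ] WithLp 2 (E × E) :=
    (WithLp.linearEquiv 2 ℝ (E × E)).symm.toLinearMap ∘ₗ LinearMap.inl ℝ E E
  let j₂ : E →ₗ[ℝ] WithLp 2 (E × E) :=
    (WithLp.linearEquiv 2 ℝ (E × E)).symm.toLinearMap ∘ₗ LinearMap.inr ℝ E E
  let k₁ : WithLp 2 (E × E) →ₗ[ℝ] E :=
    LinearMap.fst ℝ E E ∘ₗ (WithLp.linearEquiv 2 ℝ (E × E)).toLinearMap
  let k₂ : WithLp 2 (E × E) →ₗ[ℝ] E :=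
    LinearMap.snd ℝ E E ∘ₗ (WithLp.linearEquiv 2 ℝ (E × E)).toLinearMap
  let X : E →L[ℝ] E :=
    LinearMap.toContinuousLinearMap (k₁ ∘ₗ (A : _ →ₗ[ℝ] _) ∘ₗ j₁ - LinearMap.id)
  let Y : E →L[ℝ] E :=
    LinearMap.toContinuousLinearMap (LinearMap.id - k₂ ∘ₗ (A : _ →ₗ[ℝ] _) ∘ₗ j₂)
  have hX : ∀ h, ⟪A (i₁ h), i₁ h⟫ = ⟪X h, h⟫ + ‖h‖ ^ 2 := by
    intro h
    have e : X h = (A (i₁ h)).fst - h := rfl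
    rw [e, inner_sub_left, real_inner_self_eq_norm_sq]
    simp [WithLp.prod_inner_apply, i₁]
  have hY : ∀ h, ⟪A (i₂ h), i₂ h⟫ = -⟪Y h, h⟫ + ‖h‖ ^ 2 := by
    intro h
    have e : Y h = h - (A (i₂ h)).snd := rfl
    rw [e, inner_sub_left, real_inner_self_eq_norm_sq]
    simp [WithLp.prod_inner_apply, i₂]
  have hexp₁ : ∀ h, ‖h‖ < δ → |f₁ (x + h) - f₁ x - ⟪ξ, h⟫
      - (1 / 2) * (⟪X h, h⟫ + ‖h‖ ^ 2)| ≤ r * ‖h‖ ^ 2 := by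
    intro h hh
    have h1 := hexp (i₁ h) (by rwa [i₁n])
    rw [hX, i₁n] at h1
    have e1 : f (z₀ + i₁ h) - f z₀ = f₁ (x + h) - f₁ x := by
      simp [f, i₁, hx]
    have e2 : ⟪ζ z₀, i₁ h⟫ = ⟪ξ, h⟫ := by
      simp [WithLp.prod_inner_apply, i₁, ζ, hξ, hx]
    rwa [e1, e2] at h1
  have hexp₂ : ∀ h, ‖h‖ < δ → |f₂ (y + h) - f₂ y - ⟪η, h⟫
      - (1 / 2) * (-⟪Y h, h⟫ + ‖h‖ ^ 2)| ≤ r * ‖h‖ ^ 2 := by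
    intro h hh
    have h1 := hexp (i₂ h) (by rwa [i₂n])
    rw [hY, i₂n] at h1
    have e1 : f (z₀ + i₂ h) - f z₀ = f₂ (y + h) - f₂ y := by
      simp [f, i₂, hy]
    have e2 : ⟪ζ z₀, i₂ h⟫ = ⟪η, h⟫ := by
      simp [WithLp.prod_inner_apply, i₂, ζ, hη, hy]
    rwa [e1, e2] at h1
  refine ⟨ξ, hζ₁K x, η, hζ₂K y, ξ - x, y - η, X, Y, δ, hδ, ?_, ?_, ?_, ?_, ?_, ?_⟩
  · have e : ξ - x - (1 / 3 : ℝ) • (ξ - η) = -((2 / 3 : ℝ) • p.fst + (1 / 3 : ℝ) • p.snd) := by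
      rw [hp1, hp2]; module
    rw [e, norm_neg]
    refine (norm_add_le _ _).trans ?_
    rw [norm_smul, norm_smul]
    norm_num
    linarith
  · have e : y - η - (1 / 3 : ℝ) • (ξ - η) = (1 / 3 : ℝ) • p.fst + (2 / 3 : ℝ) • p.snd := by
      rw [hp1, hp2]; module
    rw [e]
    refine (norm_add_le _ _).trans ?_
    rw [norm_smul, norm_smul]
    norm_num
    linarith
  · intro ξ' hξ' η' hη'
    let x' := ξ' - (1 / 3 : ℝ) • (ξ' - η')
    let y' := η' + (1 / 3 : ℝ) • (ξ' - η')
    have h1 := hz₀ (WithLp.toLp 2 (x', y'))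
    have h2 := hm₁ x' ξ' hξ'
    have h3 := hm₂ y' η' hη'
    simp only [inner_sumOperator_self] at h1
    simp only [f, WithLp.toLp_fst, WithLp.toLp_snd, ← hx, ← hy] at h1
    rw [hf₁ x, hf₂ y, ← hξ, ← hη] at h1
    have l1 := legendre_eq x' ξ'
    have l2 := legendre_eq y' η'
    have l3 := legendre_eq x ξ
    have l4 := legendre_eq y η
    have s1 := sixth_sq_le x y ξ η
    have d1 : ‖x' - ξ'‖ ^ 2 = (1 / 9) * ‖ξ' - η'‖ ^ 2 := by
      have : x' - ξ' = (-1 / 3 : ℝ) • (ξ' - η') := by simp only [x']; module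
      rw [this, norm_smul, mul_pow]; norm_num
    have d2 : ‖y' - η'‖ ^ 2 = (1 / 9) * ‖ξ' - η'‖ ^ 2 := by
      have : y' - η' = (1 / 3 : ℝ) • (ξ' - η') := by simp only [y']; module
      rw [this, norm_smul, mul_pow]; norm_num
    have d3 : ‖x' - y'‖ ^ 2 = (1 / 9) * ‖ξ' - η'‖ ^ 2 := by
      have : x' - y' = (1 / 3 : ℝ) • (ξ' - η') := by simp only [x', y']; module
      rw [this, norm_smul, mul_pow]; norm_num
    have hz0n : ‖z₀‖ ≤ 2 * ρ + 1 := by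
      have e1 : sumOperator E z₀ = p + ζ z₀ := by rw [hpe]; abel
      have e2 : ‖z₀‖ ^ 2 ≤ ‖p + ζ z₀‖ * ‖z₀‖ :=
        (hBpos z₀).trans (by rw [e1]; exact real_inner_le_norm _ _)
      have e3 : ‖p + ζ z₀‖ ≤ 2 * ρ + 1 :=
        (norm_add_le _ _).trans (by linarith [hζρ z₀])
      by_contra! hcon
      nlinarith [norm_nonneg z₀]
    have hξ'n := hρ ξ' hξ'
    have hη'n := hρ η' hη'
    have hdn : ‖(1 / 3 : ℝ) • (ξ' - η')‖ ≤ ρ := by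
      rw [norm_smul]
      have := norm_sub_le ξ' η'
      norm_num
      linarith
    have hx'n : ‖x'‖ ≤ 2 * ρ := (norm_sub_le _ _).trans (by linarith)
    have hy'n : ‖y'‖ ≤ 2 * ρ := (norm_add_le _ _).trans (by linarith)
    have hz'n : ‖(WithLp.toLp 2 (x', y') : WithLp 2 (E × E))‖ ≤ 4 * ρ := by
      refine (norm_le _).trans ?_
      simp only [WithLp.toLp_fst, WithLp.toLp_snd]
      linarith
    have hpz : ⟪p, z₀⟫ - ⟪p, (WithLp.toLp 2 (x', y') : WithLp 2 (E × E))⟫ ≤ r := by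
      rw [← inner_sub_right]
      refine (real_inner_le_norm _ _).trans ?_
      have e1 := norm_sub_le z₀ (WithLp.toLp 2 (x', y'))
      calc _ ≤ r' * (6 * ρ + 1) := by
            gcongr
            linarith
        _ ≤ r' * (8 * ρ + 8) := by gcongr <;> linarith
        _ ≤ r := hr'3
    linarith
  · intro h hh hK'
    have h1 := hm₁ (x + h) _ hK'
    have h2 := (abs_le.1 (hexp₁ h hh)).2
    rw [hf₁ x, ← hξ] at h2
    have l1 := legendre_eq (x + h) (ξ + h)
    have l2 := legendre_eq x ξ
    rw [add_sub_add_right_eq_sub] at l1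
    have l3 := norm_add_sq_real x h
    rw [inner_sub_left]
    linarith
  · intro h hh hK'
    have h1 := hm₂ (y + h) _ hK'
    have h2 := (abs_le.1 (hexp₂ h hh)).2
    rw [hf₂ y, ← hη] at h2
    have l1 := legendre_eq (y + h) (η + h)
    have l2 := legendre_eq y η
    rw [add_sub_add_right_eq_sub] at l1
    have l3 := norm_add_sq_real y h
    rw [inner_sub_left]
    linarith
  · intro h k
    by_contra! hcon
    obtain ⟨ε, hε, hε'⟩ : ∃ ε > 0, ‖h - k‖ ^ 2 + ε < ⟪X h, h⟫ - ⟪Y k, k⟫ :=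
      ⟨(⟪X h, h⟫ - ⟪Y k, k⟫ - ‖h - k‖ ^ 2) / 2, by linarith, by linarith⟩
    set c := ‖h‖ ^ 2 + ‖k‖ ^ 2 + 1 with hc
    have hc0 : 0 < c := by positivity
    obtain ⟨δ', hδ', hexp'⟩ := second_order_of_hasFDerivAt_subgradient hζ hA
      (ε := ε / (2 * c)) (by positivity)
    set s := δ' / (2 * (‖h‖ + ‖k‖ + 1)) with hs
    have hs0 : 0 < s := by positivity
    have hsn : s * (‖h‖ + ‖k‖ + 1) = δ' / 2 := by rw [hs]; field_simp
    have g1 := hexp' (i₁ (s • h)) (by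
      rw [i₁n, norm_smul, Real.norm_of_nonneg hs0.le]; nlinarith [norm_nonneg k])
    have g2 := hexp' (i₂ (s • k)) (by
      rw [i₂n, norm_smul, Real.norm_of_nonneg hs0.le]; nlinarith [norm_nonneg h])
    have g3 := hup (i₁ (s • h) + i₂ (s • k))
    rw [hX, i₁n] at g1
    rw [hY, i₂n] at g2
    have e1 : f (z₀ + i₁ (s • h)) - f z₀ = f₁ (x + s • h) - f₁ x := by simp [f, i₁, hx]
    have e2 : f (z₀ + i₂ (s • k)) - f z₀ = f₂ (y + s • k) - f₂ y := by simp [f, i₂, hy]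
    have e3 : f (z₀ + (i₁ (s • h) + i₂ (s • k))) = f₁ (x + s • h) + f₂ (y + s • k) := by
      simp [f, i₁, i₂, hx, hy]
    have e4 : f z₀ = f₁ x + f₂ y := rfl
    have e5 : i₁ (s • h) + i₂ (s • k) = WithLp.toLp 2 (s • h, s • k) := by
      refine WithLp.ofLp_injective 2 (Prod.ext ?_ ?_) <;> simp [i₁, i₂]
    rw [e3, inner_add_right, e4, e5, inner_sumOperator_self] at g3
    simp only [WithLp.toLp_fst, WithLp.toLp_snd, ← smul_sub, norm_smul, mul_pow,
      Real.norm_eq_abs, sq_abs] at g3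
    rw [e1] at g1
    rw [e2] at g2
    simp only [map_smul, inner_smul_left, inner_smul_right, norm_smul, mul_pow,
      Real.norm_eq_abs, sq_abs, RCLike.conj_to_real] at g1 g2
    have g1' := (abs_le.1 g1).1
    have g2' := (abs_le.1 g2).1
    have k1 : s ^ 2 * (⟪X h, h⟫ - ⟪Y k, k⟫ - ‖h - k‖ ^ 2)
        ≤ s ^ 2 * (ε / c * (‖h‖ ^ 2 + ‖k‖ ^ 2)) := by
      have : ε / (2 * c) * (s ^ 2 * ‖h‖ ^ 2) + ε / (2 * c) * (s ^ 2 * ‖k‖ ^ 2)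
          = (1 / 2) * (s ^ 2 * (ε / c * (‖h‖ ^ 2 + ‖k‖ ^ 2))) := by field_simp
      nlinarith
    have k2 := le_of_mul_le_mul_left k1 (by positivity)
    have k3 : ε / c * (‖h‖ ^ 2 + ‖k‖ ^ 2) ≤ ε := by
      rw [div_mul_eq_mul_div, div_le_iff₀ hc0]
      nlinarith
    linarith

end Sums

section TestFunctions

open Filter Topology

/-- A function that is `C³` at a point coincides near that point, up to an additive constant,
with a test function. -/
lemma exists_isTestFunction_eventuallyEq {n : ℕ} {φ : ℝ × Eucl n → ℝ} {z : ℝ × Eucl n}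
    (hφ : ContDiffAt ℝ 3 φ z) (c : ℝ) :
    ∃ ψ : ℝ → Eucl n → ℝ, IsTestFunction ψ ∧ ∀ᶠ p in 𝓝 z, ψ p.1 p.2 = φ p + c := by
  obtain ⟨ρ, hρ, hball⟩ := Metric.eventually_nhds_iff_ball.1 (hφ.eventually (by simp))
  let bump : ContDiffBump z := ⟨ρ / 4, ρ / 2, by positivity, by linarith⟩
  have hsupp : HasCompactSupport fun p => bump p * φ p := bump.hasCompactSupport.mul_right
  have hsmooth : ContDiff ℝ 3 fun p => bump p * φ p := by
    refine contDiff_iff_contDiffAt.2 fun p => ?_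
    by_cases hp' : p ∈ tsupport bump
    swap
    · refine contDiffAt_const (c := (0 : ℝ)) |>.congr_of_eventuallyEq ?_
      filter_upwards [notMem_tsupport_iff_eventuallyEq.1 hp'] with p' h
      rw [h, Pi.zero_apply, zero_mul]
    rw [bump.tsupport_eq] at hp'
    refine bump.contDiffAt.mul (hball p ?_)
    have : dist p z ≤ ρ / 2 := hp'
    rw [Metric.mem_ball]
    linarith
  refine ⟨fun t x => bump (t, x) * φ (t, x) + c, ⟨hsmooth.add contDiff_const, ?_⟩, ?_⟩
  · intro i hi hi3
    have hcont : Continuous (iteratedFDeriv ℝ i fun p => bump p * φ p) :=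
      hsmooth.continuous_iteratedFDeriv (by exact_mod_cast hi3)
    obtain ⟨M, hM⟩ := (hsupp.iteratedFDeriv i).exists_bound_of_continuous hcont
    refine ⟨M, fun p => ?_⟩
    have h : iteratedFDeriv ℝ i (fun q : ℝ × Eucl n => bump (q.1, q.2) * φ (q.1, q.2) + c) p =
        iteratedFDeriv ℝ i (fun p => bump p * φ p) p := by
      have hi3' : ((i : ℕ) : WithTop ℕ∞) ≤ 3 := by exact_mod_cast hi3
      have := fun_iteratedFDeriv_add_apply (x := p) (i := i)
        ((hsmooth.of_le hi3').contDiffAt) (contDiffAt_const (c := c))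
      rw [iteratedFDeriv_const_of_ne (by omega)] at this
      rwa [Pi.zero_apply, add_zero] at this
    rw [h]
    exact hM p
  · filter_upwards [bump.eventuallyEq_one] with p hp
    have hp' : bump (p.1, p.2) = 1 := hp
    rw [hp', one_mul]

/-- The matrix of the bilinear form `(h, k) ↦ ⟪A h, k⟫`. -/
def formMatrix {n : ℕ} (A : Eucl n →L[ℝ] Eucl n) : Matrix (Fin n) (Fin n) ℝ :=
  Matrix.of fun i j => ⟪A (EuclideanSpace.single i (1 : ℝ)), EuclideanSpace.single j (1 : ℝ)⟫

lemma spaceGrad_spaceHess_of_hasGradientAt {n : ℕ} {ψ : ℝ → Eucl n → ℝ} {t : ℝ} {x : Eucl n}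
    {g : Eucl n → Eucl n} {A : Eucl n →L[ℝ] Eucl n}
    (hg : ∀ᶠ y in 𝓝 x, HasGradientAt (fun y => ψ t y) (g y) y) (hA : HasFDerivAt g A x) :
    spaceGrad ψ t x = g x ∧ spaceHess ψ t x = formMatrix A := by
  refine ⟨hg.self_of_nhds.gradient, ?_⟩
  ext i j
  have h : (fun y => fderiv ℝ (fun y' => ψ t y') y (EuclideanSpace.single j (1 : ℝ))) =ᶠ[𝓝 x]
      fun y => ⟪g y, EuclideanSpace.single j (1 : ℝ)⟫ := by
    filter_upwards [hg] with y hy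
    rw [hy.hasFDerivAt.fderiv]
    simp
  have h2 : HasFDerivAt (fun y => ⟪g y, EuclideanSpace.single j (1 : ℝ)⟫) _ x :=
    hA.inner ℝ (hasFDerivAt_const _ _)
  simp only [spaceHess, formMatrix, Matrix.of_apply]
  rw [h.fderiv_eq, h2.fderiv]
  simp

theorem IsViscositySubsolution.ineq_of_contDiffAt {n : ℕ} {T : ℝ}
    {G : ℝ → Eucl n → ℝ → Eucl n → Matrix (Fin n) (Fin n) ℝ → ℝ} {g₀ : Eucl n → ℝ}
    {w : ℝ → Eucl n → ℝ} (hw : IsViscositySubsolution T G g₀ w) {φ : ℝ × Eucl n → ℝ}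
    {t : ℝ} {x : Eucl n} (ht : t ∈ Set.Ico (0 : ℝ) T) (hφ : ContDiffAt ℝ 3 φ (t, x))
    (hmax : IsLocalMaxOn (fun p : ℝ × Eucl n => w p.1 p.2 - φ p)
      (Set.Icc (0 : ℝ) T ×ˢ (Set.univ : Set (Eucl n))) (t, x))
    {a : ℝ} (ha : HasDerivAt (fun s => φ (s, x)) a t) {g : Eucl n → Eucl n}
    (hg : ∀ᶠ y in 𝓝 x, HasGradientAt (fun y => φ (t, y)) (g y) y)
    {A : Eucl n →L[ℝ] Eucl n} (hA : HasFDerivAt g A x) (y : ℝ) :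
    0 ≤ a + G t x y (g x) (formMatrix A) := by
  obtain ⟨ψ, hψ, heq⟩ := exists_isTestFunction_eventuallyEq hφ (y - φ (t, x))
  have htime : ∀ᶠ s in 𝓝 t, ψ s x = φ (s, x) + (y - φ (t, x)) :=
    (by fun_prop : ContinuousAt (fun s => (s, x)) t).eventually heq
  have hspace : ∀ᶠ y' in 𝓝 x, ψ t y' = φ (t, y') + (y - φ (t, x)) :=
    (by fun_prop : ContinuousAt (fun y => (t, y)) x).eventually heq
  have h1 : timeDeriv ψ t x = a := ((ha.add_const _).congr_of_eventuallyEq htime).deriv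
  have hg' : ∀ᶠ y' in 𝓝 x, HasGradientAt (fun y => ψ t y) (g y') y' := by
    filter_upwards [hg, hspace.eventually_nhds] with y' hy' hs
    rw [hasGradientAt_iff_hasFDerivAt] at hy' ⊢
    exact (hy'.add_const _).congr_of_eventuallyEq hs
  obtain ⟨h2, h3⟩ := spaceGrad_spaceHess_of_hasGradientAt hg' hA
  have h4 : ψ t x = y := by
    have := hspace.self_of_nhds
    rw [this]; ring
  have := hw.2 ψ hψ t ht x ?_
  · rwa [h1, h2, h3, h4] at this
  · filter_upwards [hmax, mem_nhdsWithin_of_mem_nhds heq] with p hp hp'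
    have h5 := heq.self_of_nhds
    simp only at hp h5 ⊢
    rw [hp', h5]
    linarith

theorem IsViscositySupersolution.ineq_of_contDiffAt {n : ℕ} {T : ℝ}
    {G : ℝ → Eucl n → ℝ → Eucl n → Matrix (Fin n) (Fin n) ℝ → ℝ} {g₀ : Eucl n → ℝ}
    {w : ℝ → Eucl n → ℝ} (hw : IsViscositySupersolution T G g₀ w) {φ : ℝ × Eucl n → ℝ}
    {t : ℝ} {x : Eucl n} (ht : t ∈ Set.Ico (0 : ℝ) T) (hφ : ContDiffAt ℝ 3 φ (t, x))
    (hmin : IsLocalMinOn (fun p : ℝ × Eucl n => w p.1 p.2 - φ p)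
      (Set.Icc (0 : ℝ) T ×ˢ (Set.univ : Set (Eucl n))) (t, x))
    {a : ℝ} (ha : HasDerivAt (fun s => φ (s, x)) a t) {g : Eucl n → Eucl n}
    (hg : ∀ᶠ y in 𝓝 x, HasGradientAt (fun y => φ (t, y)) (g y) y)
    {A : Eucl n →L[ℝ] Eucl n} (hA : HasFDerivAt g A x) (y : ℝ) :
    a + G t x y (g x) (formMatrix A) ≤ 0 := by
  obtain ⟨ψ, hψ, heq⟩ := exists_isTestFunction_eventuallyEq hφ (y - φ (t, x))
  have htime : ∀ᶠ s in 𝓝 t, ψ s x = φ (s, x) + (y - φ (t, x)) :=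
    (by fun_prop : ContinuousAt (fun s => (s, x)) t).eventually heq
  have hspace : ∀ᶠ y' in 𝓝 x, ψ t y' = φ (t, y') + (y - φ (t, x)) :=
    (by fun_prop : ContinuousAt (fun y => (t, y)) x).eventually heq
  have h1 : timeDeriv ψ t x = a := ((ha.add_const _).congr_of_eventuallyEq htime).deriv
  have hg' : ∀ᶠ y' in 𝓝 x, HasGradientAt (fun y => ψ t y) (g y') y' := by
    filter_upwards [hg, hspace.eventually_nhds] with y' hy' hs
    rw [hasGradientAt_iff_hasFDerivAt] at hy' ⊢
    exact (hy'.add_const _).congr_of_eventuallyEq hs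
  obtain ⟨h2, h3⟩ := spaceGrad_spaceHess_of_hasGradientAt hg' hA
  have h4 : ψ t x = y := by
    have := hspace.self_of_nhds
    rw [this]; ring
  have := hw.2 ψ hψ t ht x ?_
  · rwa [h1, h2, h3, h4] at this
  · filter_upwards [hmin, mem_nhdsWithin_of_mem_nhds heq] with p hp hp'
    have h5 := heq.self_of_nhds
    simp only at hp h5 ⊢
    rw [hp', h5]
    linarith

/-- The columns of a matrix as vectors of the Euclidean space. -/
def colVec {n d : ℕ} (M : Matrix (Fin n) (Fin d) ℝ) (k : Fin d) : Eucl n :=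
  WithLp.toLp 2 fun i => M i k

lemma colVec_sub {n d : ℕ} (M N : Matrix (Fin n) (Fin d) ℝ) (k : Fin d) :
    colVec (M - N) k = colVec M k - colVec N k := rfl

lemma sum_norm_colVec_sq {n d : ℕ} (M : Matrix (Fin n) (Fin d) ℝ) :
    ∑ k, ‖colVec M k‖ ^ 2 = ‖M‖ ^ 2 := by
  rw [Matrix.frobenius_norm_def, ← Real.sqrt_eq_rpow, Real.sq_sqrt (by positivity),
    Finset.sum_comm]
  refine Finset.sum_congr rfl fun k _ => ?_
  rw [EuclideanSpace.norm_sq_eq]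
  simp [colVec]

lemma trace_mul_formMatrix {n d : ℕ} (M : Matrix (Fin n) (Fin d) ℝ) (A : Eucl n →L[ℝ] Eucl n) :
    Matrix.trace (M * Mᵀ * formMatrix A) = ∑ k, ⟪A (colVec M k), colVec M k⟫ := by
  have hcol : ∀ k, colVec M k = ∑ i, M i k • EuclideanSpace.single i (1 : ℝ) := by
    intro k
    ext i
    simp [colVec, Finset.sum_apply, Pi.single_apply]
  have h : ∀ k, ⟪A (colVec M k), colVec M k⟫ = ∑ i, ∑ j, M i k * M j k * formMatrix A i j := by
    intro k
    conv_lhs => rw [hcol k]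
    rw [map_sum, sum_inner]
    refine Finset.sum_congr rfl fun i _ => ?_
    rw [inner_sum]
    refine Finset.sum_congr rfl fun j _ => ?_
    rw [map_smul, real_inner_smul_left, real_inner_smul_right]
    simp only [formMatrix, Matrix.of_apply]
    ring
  have htr : Matrix.trace (M * Mᵀ * formMatrix A) =
      ∑ i, ∑ j, ∑ k, M i k * M j k * formMatrix A j i := by
    simp only [Matrix.trace, Matrix.diag_apply, Matrix.mul_apply, Matrix.transpose_apply,
      Finset.sum_mul]
  rw [htr, Finset.sum_congr rfl fun k _ => h k, Finset.sum_comm, Finset.sum_comm (γ := Fin d)]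
  refine Finset.sum_congr rfl fun i _ => ?_
  rw [Finset.sum_comm]
  refine Finset.sum_congr rfl fun k _ => Finset.sum_congr rfl fun j _ => ?_
  ring

lemma norm_rowMul_le {n d : ℕ} (p : Eucl n) (M : Matrix (Fin n) (Fin d) ℝ) :
    ‖rowMul p M‖ ≤ ‖p‖ * ‖M‖ := by
  refine abs_le_of_sq_le_sq' ?_ (by positivity) |>.2
  rw [mul_pow, ← sum_norm_colVec_sq, EuclideanSpace.norm_sq_eq, Finset.mul_sum]
  refine Finset.sum_le_sum fun k _ => ?_
  have h : rowMul p M k = ⟪p, colVec M k⟫ := by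
    simp [rowMul, colVec, PiLp.inner_apply, mul_comm]
  rw [h, ← mul_pow, Real.norm_eq_abs]
  exact pow_le_pow_left₀ (abs_nonneg _) (abs_real_inner_le_norm _ _) 2

lemma rowMul_sub_left {n d : ℕ} (p p' : Eucl n) (M : Matrix (Fin n) (Fin d) ℝ) :
    rowMul (p - p') M = rowMul p M - rowMul p' M := by
  ext k
  simp [rowMul, sub_mul]

lemma rowMul_sub_right {n d : ℕ} (p : Eucl n) (M M' : Matrix (Fin n) (Fin d) ℝ) :
    rowMul p (M - M') = rowMul p M - rowMul p M' := by
  ext k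
  simp [rowMul, mul_sub]

end TestFunctions

section Quadratic

open Filter Topology

/-- Time-space points, with the Hilbert space norm. -/
abbrev TimeSpace (n : ℕ) := WithLp 2 (ℝ × Eucl n)

/-- The rescaling `(t, x) ↦ (t / a, x / c)` with values in the Hilbert space `ℝ × ℝⁿ`. -/
def rescale {n : ℕ} (a c : ℝ) : (ℝ × Eucl n) →L[ℝ] TimeSpace n :=
  ((WithLp.prodContinuousLinearEquiv 2 ℝ ℝ (Eucl n)).symm : (ℝ × Eucl n) →L[ℝ] TimeSpace n) ∘L
    ((a⁻¹ • ContinuousLinearMap.fst ℝ ℝ (Eucl n)).prod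
      (c⁻¹ • ContinuousLinearMap.snd ℝ ℝ (Eucl n)))

@[simp] lemma rescale_fst {n : ℕ} (a c : ℝ) (z : ℝ × Eucl n) :
    (rescale a c z).fst = a⁻¹ * z.1 := rfl

@[simp] lemma rescale_snd {n : ℕ} (a c : ℝ) (z : ℝ × Eucl n) :
    (rescale a c z).snd = c⁻¹ • z.2 := rfl

variable {E F : Type*} [NormedAddCommGroup E] [InnerProductSpace ℝ E] [CompleteSpace E]
  [NormedAddCommGroup F] [InnerProductSpace ℝ F] [CompleteSpace F]

/-- The second order polynomial with gradient `q`, Hessian `X + 2r` at the origin. -/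
def quadPoly (q : E) (X : E →L[ℝ] E) (r : ℝ) (e : E) : ℝ :=
  ⟪q, e⟫ + (1 / 2) * ⟪X e, e⟫ + r * ‖e‖ ^ 2

/-- The gradient of `quadPoly`. -/
def quadGrad (q : E) (X : E →L[ℝ] E) (r : ℝ) (e : E) : E :=
  q + ((1 / 2 : ℝ) • (X e + X.adjoint e) + (2 * r) • e)

lemma contDiff_quadPoly {E : Type*} [NormedAddCommGroup E] [InnerProductSpace ℝ E] (q : E)
    (X : E →L[ℝ] E) (r : ℝ) : ContDiff ℝ 3 (quadPoly q X r) := by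
  unfold quadPoly
  exact ((contDiff_const.inner ℝ contDiff_id).add
    (contDiff_const.mul (X.contDiff.inner ℝ contDiff_id))).add
    (contDiff_const.mul (contDiff_norm_sq ℝ))

lemma hasFDerivAt_quadPoly (q : E) (X : E →L[ℝ] E) (r : ℝ) (e : E) :
    HasFDerivAt (quadPoly q X r) (innerSL ℝ (quadGrad q X r e)) e := by
  have h1 : HasFDerivAt (fun e : E => ⟪q, e⟫) _ e := (innerSL ℝ q).hasFDerivAt
  have h2 : HasFDerivAt (fun e : E => ⟪X e, e⟫) _ e := X.hasFDerivAt.inner ℝ (hasFDerivAt_id e)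
  have h3 : HasFDerivAt (fun e : E => ‖e‖ ^ 2) _ e := (hasStrictFDerivAt_norm_sq e).hasFDerivAt
  refine ((h1.add (h2.const_mul (1 / 2))).add (h3.const_mul r)).congr_fderiv ?_
  ext h
  simp [quadGrad, ContinuousLinearMap.adjoint_inner_left, real_inner_comm]
  ring

lemma hasGradientAt_quadPoly_comp (q : E) (X : E →L[ℝ] E) (r : ℝ) (J : F →L[ℝ] E) (x y : F) :
    HasGradientAt (fun y => quadPoly q X r (J (y - x)))
      (J.adjoint (quadGrad q X r (J (y - x)))) y := by
  rw [hasGradientAt_iff_hasFDerivAt]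
  have h : HasFDerivAt (fun y => J (y - x)) J y :=
    J.hasFDerivAt.comp y ((hasFDerivAt_id y).sub_const x)
  refine ((hasFDerivAt_quadPoly q X r _).comp y h).congr_fderiv ?_
  ext k
  simp [ContinuousLinearMap.adjoint_inner_left]

lemma hasFDerivAt_quadGrad_comp (q : E) (X : E →L[ℝ] E) (r : ℝ) (J : F →L[ℝ] E) (x : F) :
    HasFDerivAt (fun y => J.adjoint (quadGrad q X r (J (y - x))))
      (J.adjoint ∘L ((1 / 2 : ℝ) • (X + X.adjoint) + (2 * r) • ContinuousLinearMap.id ℝ E) ∘L J)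
      x := by
  have h : HasFDerivAt (fun y => J (y - x)) J x :=
    J.hasFDerivAt.comp x ((hasFDerivAt_id x).sub_const x)
  refine J.adjoint.hasFDerivAt.comp x ?_
  refine HasFDerivAt.const_add q ?_
  exact (((1 / 2 : ℝ) • (X + X.adjoint) +
    (2 * r) • ContinuousLinearMap.id ℝ E).hasFDerivAt).comp x h

lemma inner_quadHess (X : E →L[ℝ] E) (r : ℝ) (J : F →L[ℝ] E) (h : F) :
    ⟪(J.adjoint ∘L ((1 / 2 : ℝ) • (X + X.adjoint) + (2 * r) • ContinuousLinearMap.id ℝ E) ∘L J) h,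
      h⟫ = ⟪X (J h), J h⟫ + 2 * r * ‖J h‖ ^ 2 := by
  simp only [ContinuousLinearMap.comp_apply, ContinuousLinearMap.adjoint_inner_left,
    add_apply, smul_apply, inner_add_left,
    real_inner_smul_left, ContinuousLinearMap.id_apply, real_inner_self_eq_norm_sq,
    real_inner_comm (X (J h)) (J h)]
  ring

end Quadratic

section Barrier

open Filter Topology

/-- The logarithmic weight `log √(1 + s) + 1`. -/
def logWeight (s : ℝ) : ℝ := Real.log (1 + s) / 2 + 1

lemma one_le_logWeight {s : ℝ} (hs : 0 ≤ s) : 1 ≤ logWeight s := by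
  have := Real.log_nonneg (by linarith : (1 : ℝ) ≤ 1 + s)
  unfold logWeight
  linarith

lemma hasDerivAt_logWeight {s : ℝ} (hs : 0 ≤ s) :
    HasDerivAt logWeight (1 / (2 * (1 + s))) s := by
  have h : HasDerivAt (fun s : ℝ => 1 + s) 1 s := (hasDerivAt_id s).const_add 1
  have := ((h.log (by positivity)).div_const 2).add_const 1
  refine this.congr_deriv ?_
  field_simp

/-- The barrier function `exp (logWeight(|x|²)² / (c (t - t₁)))`. -/
def barrier {n : ℕ} (c t₁ : ℝ) (p : ℝ × Eucl n) : ℝ :=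
  Real.exp ((c * (p.1 - t₁))⁻¹ * logWeight (‖p.2‖ ^ 2) ^ 2)

/-- The time derivative of the barrier. -/
def barrierTime {n : ℕ} (c t₁ t : ℝ) (x : Eucl n) : ℝ :=
  -(c * ((c * (t - t₁))⁻¹ * logWeight (‖x‖ ^ 2)) ^ 2 * barrier c t₁ (t, x))

/-- The factor `m` such that `m x` is the gradient of the barrier. -/
def barrierFactor (l s : ℝ) : ℝ :=
  2 * l * Real.exp (l * logWeight s ^ 2) * logWeight s / (1 + s)

/-- The derivative of `barrierFactor`. -/
def barrierFactorDeriv (l s : ℝ) : ℝ :=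
  2 * l * Real.exp (l * logWeight s ^ 2) *
    (l * logWeight s ^ 2 + 1 / 2 - logWeight s) / (1 + s) ^ 2

/-- The spatial gradient of the barrier. -/
def barrierGrad {n : ℕ} (c t₁ t : ℝ) (x : Eucl n) : Eucl n :=
  barrierFactor (c * (t - t₁))⁻¹ (‖x‖ ^ 2) • x

/-- The spatial Hessian of the barrier. -/
def barrierHess {n : ℕ} (c t₁ t : ℝ) (x : Eucl n) : Eucl n →L[ℝ] Eucl n :=
  barrierFactor (c * (t - t₁))⁻¹ (‖x‖ ^ 2) • ContinuousLinearMap.id ℝ (Eucl n) +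
    (barrierFactorDeriv (c * (t - t₁))⁻¹ (‖x‖ ^ 2) • (2 • innerSL ℝ x)).smulRight x

lemma contDiffAt_barrier {n : ℕ} {c t₁ t : ℝ} (hc : 0 < c) (ht : t₁ < t) (x : Eucl n) :
    ContDiffAt ℝ 3 (barrier c t₁) (t, x) := by
  unfold barrier logWeight
  refine (ContDiffAt.mul ?_ ?_).exp
  · refine ContDiffAt.inv (contDiffAt_const.mul (contDiffAt_fst.sub contDiffAt_const)) ?_
    exact (mul_pos hc (sub_pos.2 ht)).ne'
  · refine ContDiffAt.pow ?_ 2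
    refine ContDiffAt.add (ContDiffAt.div_const (ContDiffAt.log ?_ ?_) 2) contDiffAt_const
    · exact contDiffAt_const.add (contDiffAt_snd.norm_sq ℝ)
    · positivity

lemma hasDerivAt_barrier {n : ℕ} {c t₁ t : ℝ} (hc : 0 < c) (ht : t₁ < t) (x : Eucl n) :
    HasDerivAt (fun s => barrier c t₁ (s, x)) (barrierTime c t₁ t x) t := by
  have hne : c * (t - t₁) ≠ 0 := (mul_pos hc (sub_pos.2 ht)).ne'
  have h : HasDerivAt (fun s => c * (s - t₁)) (c * 1) t :=
    ((hasDerivAt_id t).sub_const t₁).const_mul c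
  refine ((h.inv hne).mul_const (logWeight (‖x‖ ^ 2) ^ 2)).exp.congr_deriv ?_
  simp only [barrierTime, barrier]
  simp only [Pi.inv_apply]
  field_simp

lemma hasDerivAt_barrierFactor (l : ℝ) {s : ℝ} (hs : 0 ≤ s) :
    HasDerivAt (barrierFactor l) (barrierFactorDeriv l s) s := by
  have h := hasDerivAt_logWeight hs
  have h1 : HasDerivAt (fun s : ℝ => 1 + s) 1 s := (hasDerivAt_id s).const_add 1
  have h2 := ((((h.pow 2).const_mul l).exp.const_mul (2 * l)).mul h).div h1 (by positivity)
  refine h2.congr_deriv ?_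
  simp only [barrierFactorDeriv, Pi.pow_apply, Pi.mul_apply]
  have : 1 + s ≠ 0 := by positivity
  field_simp
  ring

lemma hasGradientAt_barrier {n : ℕ} (c t₁ t : ℝ) (x : Eucl n) :
    HasGradientAt (fun y => barrier c t₁ (t, y)) (barrierGrad c t₁ t x) x := by
  rw [hasGradientAt_iff_hasFDerivAt]
  have h := hasDerivAt_logWeight (sq_nonneg ‖x‖)
  have h1 := ((h.pow 2).const_mul (c * (t - t₁))⁻¹).exp
  have h3 : HasFDerivAt (fun e : Eucl n => ‖e‖ ^ 2) _ x :=
    (hasStrictFDerivAt_norm_sq x).hasFDerivAt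
  refine (h1.comp_hasFDerivAt x h3).congr_fderiv ?_
  ext k
  simp only [barrierGrad, barrierFactor, map_smul]
  simp [InnerProductSpace.toDual_apply_apply]
  have : 1 + ‖x‖ ^ 2 ≠ 0 := by positivity
  field_simp

lemma hasFDerivAt_barrierGrad {n : ℕ} (c t₁ t : ℝ) (x : Eucl n) :
    HasFDerivAt (barrierGrad c t₁ t) (barrierHess c t₁ t x) x := by
  have h3 : HasFDerivAt (fun e : Eucl n => ‖e‖ ^ 2) (2 • innerSL ℝ x) x :=
    (hasStrictFDerivAt_norm_sq x).hasFDerivAt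
  exact ((hasDerivAt_barrierFactor (c * (t - t₁))⁻¹ (sq_nonneg ‖x‖)).comp_hasFDerivAt x h3).smul
    (hasFDerivAt_id x)

lemma inner_barrierHess_le {n : ℕ} {c t₁ t : ℝ} (hl : 0 ≤ (c * (t - t₁))⁻¹) (x h : Eucl n) :
    ⟪barrierHess c t₁ t x h, h⟫ ≤
      barrier c t₁ (t, x) * (2 * ((c * (t - t₁))⁻¹ * logWeight (‖x‖ ^ 2)) +
        4 * ((c * (t - t₁))⁻¹ * logWeight (‖x‖ ^ 2)) ^ 2) / (1 + ‖x‖ ^ 2) * ‖h‖ ^ 2 := by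
  have hL := one_le_logWeight (sq_nonneg ‖x‖)
  have hin : ⟪x, h⟫ ^ 2 ≤ ‖x‖ ^ 2 * ‖h‖ ^ 2 := by
    rw [← mul_pow, ← sq_abs]
    exact pow_le_pow_left₀ (abs_nonneg _) (abs_real_inner_le_norm _ _) 2
  have heq : ⟪barrierHess c t₁ t x h, h⟫ =
      barrierFactor (c * (t - t₁))⁻¹ (‖x‖ ^ 2) * ‖h‖ ^ 2 +
        barrierFactorDeriv (c * (t - t₁))⁻¹ (‖x‖ ^ 2) * 2 * ⟪x, h⟫ ^ 2 := by
    simp [barrierHess, inner_add_left, real_inner_smul_left]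
    ring
  rw [heq]
  unfold barrierFactor barrierFactorDeriv barrier
  simp only
  generalize (c * (t - t₁))⁻¹ = l at *
  generalize logWeight (‖x‖ ^ 2) = L at *
  set e := Real.exp (l * L ^ 2) with he
  have hepos : 0 < e := Real.exp_pos _
  set s := ‖x‖ ^ 2 with hs
  have hs0 : 0 ≤ s := sq_nonneg _
  have h1 : 2 * l * e * (l * L ^ 2 + 1 / 2 - L) / (1 + s) ^ 2 * 2 * ⟪x, h⟫ ^ 2 ≤
      2 * l * e * (l * L ^ 2) / (1 + s) ^ 2 * 2 * (s * ‖h‖ ^ 2) := by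
    gcongr
    linarith
  have h2 : 2 * l * e * (l * L ^ 2) / (1 + s) ^ 2 * 2 * (s * ‖h‖ ^ 2) ≤
      2 * l * e * (l * L ^ 2) / (1 + s) ^ 2 * 2 * ((1 + s) * ‖h‖ ^ 2) := by
    gcongr
    linarith
  have h3 : 2 * l * e * (l * L ^ 2) / (1 + s) ^ 2 * 2 * ((1 + s) * ‖h‖ ^ 2) =
      e * (4 * (l * L) ^ 2) / (1 + s) * ‖h‖ ^ 2 := by
    have : 1 + s ≠ 0 := by positivity
    field_simp
    ring
  have h4 : e * (2 * (l * L) + 4 * (l * L) ^ 2) / (1 + s) * ‖h‖ ^ 2 =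
      2 * l * e * L / (1 + s) * ‖h‖ ^ 2 + e * (4 * (l * L) ^ 2) / (1 + s) * ‖h‖ ^ 2 := by
    ring
  rw [h4]
  linarith

/-- The barrier is a strict supersolution of the linearized equation. -/
theorem barrier_generator_le {n d : ℕ} {c t₁ t C₀ C : ℝ} (hC₀ : 0 ≤ C₀) (hC : 0 ≤ C)
    (hc : 6 * C₀ ^ 2 + 4 * C₀ + 4 * C * C₀ + 1 ≤ c) (hl : 1 ≤ (c * (t - t₁))⁻¹)
    (x b : Eucl n) (S : Matrix (Fin n) (Fin d) ℝ) (hb : ‖b‖ ≤ C₀ * (1 + ‖x‖))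
    (hS : ‖S‖ ≤ C₀ * (1 + ‖x‖)) :
    barrierTime c t₁ t x + 1 / 2 * ∑ k, ⟪barrierHess c t₁ t x (colVec S k), colVec S k⟫ +
      ⟪barrierGrad c t₁ t x, b⟫ + C * (‖barrierGrad c t₁ t x‖ * ‖S‖) ≤ -1 := by
  have hL := one_le_logWeight (sq_nonneg ‖x‖)
  have hl0 : 0 ≤ (c * (t - t₁))⁻¹ := by linarith
  have hx := norm_nonneg x
  have hsum : ∑ k, ⟪barrierHess c t₁ t x (colVec S k), colVec S k⟫ ≤
      barrier c t₁ (t, x) * (2 * ((c * (t - t₁))⁻¹ * logWeight (‖x‖ ^ 2)) +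
        4 * ((c * (t - t₁))⁻¹ * logWeight (‖x‖ ^ 2)) ^ 2) / (1 + ‖x‖ ^ 2) * ‖S‖ ^ 2 := by
    rw [← sum_norm_colVec_sq, Finset.mul_sum]
    exact Finset.sum_le_sum fun k _ => inner_barrierHess_le hl0 x _
  have hgrad : ‖barrierGrad c t₁ t x‖ =
      2 * ((c * (t - t₁))⁻¹ * logWeight (‖x‖ ^ 2)) * barrier c t₁ (t, x) / (1 + ‖x‖ ^ 2)
        * ‖x‖ := by
    unfold barrierGrad barrierFactor barrier
    rw [norm_smul, Real.norm_eq_abs, abs_of_nonneg (by positivity)]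
    ring
  have hinner : ⟪barrierGrad c t₁ t x, b⟫ ≤ ‖barrierGrad c t₁ t x‖ * ‖b‖ := real_inner_le_norm _ _
  have hχ : 1 ≤ barrier c t₁ (t, x) := Real.one_le_exp (by positivity)
  have hlL : 1 ≤ (c * (t - t₁))⁻¹ * logWeight (‖x‖ ^ 2) := by nlinarith
  unfold barrierTime
  generalize (c * (t - t₁))⁻¹ * logWeight (‖x‖ ^ 2) = m at *
  generalize barrier c t₁ (t, x) = χ at *
  have hgb : ∀ B : ℝ, B ≤ C₀ * (1 + ‖x‖) → ‖barrierGrad c t₁ t x‖ * B ≤ 4 * C₀ * m * χ := by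
    intro B hB
    have h1 : ‖barrierGrad c t₁ t x‖ * B ≤ ‖barrierGrad c t₁ t x‖ * (C₀ * (1 + ‖x‖)) := by gcongr
    have h2 : ‖x‖ * (1 + ‖x‖) / (1 + ‖x‖ ^ 2) ≤ 2 := by
      rw [div_le_iff₀ (by positivity)]
      nlinarith [sq_nonneg (‖x‖ - 1)]
    have h3 : ‖barrierGrad c t₁ t x‖ * (C₀ * (1 + ‖x‖)) =
        2 * m * χ * C₀ * (‖x‖ * (1 + ‖x‖) / (1 + ‖x‖ ^ 2)) := by
      rw [hgrad]; ring
    have h4 : 2 * m * χ * C₀ * (‖x‖ * (1 + ‖x‖) / (1 + ‖x‖ ^ 2)) ≤ 2 * m * χ * C₀ * 2 := by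
      gcongr
    linarith
  have hb' := hgb _ hb
  have hS' := hgb _ hS
  have hS2 : χ * (2 * m + 4 * m ^ 2) / (1 + ‖x‖ ^ 2) * ‖S‖ ^ 2 ≤
      χ * (2 * m + 4 * m ^ 2) * (2 * C₀ ^ 2) := by
    have h1 : ‖S‖ ^ 2 ≤ 2 * C₀ ^ 2 * (1 + ‖x‖ ^ 2) := by
      have : ‖S‖ ^ 2 ≤ (C₀ * (1 + ‖x‖)) ^ 2 := by gcongr
      nlinarith [mul_nonneg (sq_nonneg C₀) (sq_nonneg (‖x‖ - 1))]
    calc χ * (2 * m + 4 * m ^ 2) / (1 + ‖x‖ ^ 2) * ‖S‖ ^ 2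
        ≤ χ * (2 * m + 4 * m ^ 2) / (1 + ‖x‖ ^ 2) * (2 * C₀ ^ 2 * (1 + ‖x‖ ^ 2)) := by gcongr
      _ = _ := by field_simp
  have hm : χ * m ≤ χ * m ^ 2 := by
    have : m ≤ m ^ 2 := by nlinarith
    gcongr
  have hm1 : 1 ≤ χ * m ^ 2 := by
    have : 1 ≤ m ^ 2 := one_le_pow₀ hlL
    nlinarith
  have hCS := mul_le_mul_of_nonneg_left hS' hC
  have e1 : C₀ ^ 2 * (χ * m) ≤ C₀ ^ 2 * (χ * m ^ 2) := by gcongr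
  have e2 : C₀ * (χ * m) ≤ C₀ * (χ * m ^ 2) := by gcongr
  have e3 : C * C₀ * (χ * m) ≤ C * C₀ * (χ * m ^ 2) := by gcongr
  have e4 : (6 * C₀ ^ 2 + 4 * C₀ + 4 * C * C₀ + 1) * (χ * m ^ 2) ≤ c * (χ * m ^ 2) := by gcongr
  nlinarith

end Barrier

section Jets

open Filter Topology

variable {n d : ℕ}

/-- The spatial part of `rescale`. -/
def spaceEmb (n : ℕ) (a c : ℝ) : Eucl n →L[ℝ] TimeSpace n :=
  rescale a c ∘L ContinuousLinearMap.inr ℝ ℝ (Eucl n)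

lemma spaceEmb_adjoint (a c : ℝ) (q : TimeSpace n) :
    (spaceEmb n a c).adjoint q = c⁻¹ • q.snd := by
  refine ext_inner_right ℝ fun h => ?_
  rw [ContinuousLinearMap.adjoint_inner_left, WithLp.prod_inner_apply]
  simp [spaceEmb, real_inner_smul_left, real_inner_smul_right]

lemma norm_spaceEmb_sq (a c : ℝ) (h : Eucl n) :
    ‖spaceEmb n a c h‖ ^ 2 = (c⁻¹) ^ 2 * ‖h‖ ^ 2 := by
  rw [WithLp.prod_norm_sq_eq_of_L2]
  simp [spaceEmb, norm_smul, mul_pow]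

/-- The spatial Hessian of a rescaled second order polynomial. -/
def quadHess (a c : ℝ) (X : TimeSpace n →L[ℝ] TimeSpace n) (r : ℝ) : Eucl n →L[ℝ] Eucl n :=
  (spaceEmb n a c).adjoint ∘L ((1 / 2 : ℝ) • (X + X.adjoint) +
    (2 * r) • ContinuousLinearMap.id ℝ (TimeSpace n)) ∘L spaceEmb n a c

lemma inner_quadHess_eq (a c : ℝ) (X : TimeSpace n →L[ℝ] TimeSpace n) (r : ℝ) (h : Eucl n) :
    ⟪quadHess a c X r h, h⟫ =
      ⟪X (spaceEmb n a c h), spaceEmb n a c h⟫ + 2 * r * ((c⁻¹) ^ 2 * ‖h‖ ^ 2) := by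
  rw [quadHess, inner_quadHess, norm_spaceEmb_sq]

/-- A multiple of the barrier plus a rescaled second order polynomial centred at `z`. -/
def touching (c t₁ θ a e : ℝ) (q : TimeSpace n) (X : TimeSpace n →L[ℝ] TimeSpace n) (r : ℝ)
    (z p : ℝ × Eucl n) : ℝ :=
  θ * barrier c t₁ p + quadPoly q X r (rescale a e (p - z))

variable {c t₁ t : ℝ} (hc : 0 < c) (ht : t₁ < t) (x : Eucl n) (θ a e : ℝ) (q : TimeSpace n)
  (X : TimeSpace n →L[ℝ] TimeSpace n) (r : ℝ)

include hc ht in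
lemma contDiffAt_touching : ContDiffAt ℝ 3 (touching c t₁ θ a e q X r (t, x)) (t, x) := by
  refine (contDiffAt_const.mul (contDiffAt_barrier hc ht x)).add ?_
  refine ((contDiff_quadPoly q X r).comp ((rescale a e).contDiff.comp ?_)).contDiffAt
  exact contDiff_id.sub contDiff_const

include hc ht in
lemma hasDerivAt_touching :
    HasDerivAt (fun s => touching c t₁ θ a e q X r (t, x) (s, x))
      (θ * barrierTime c t₁ t x + a⁻¹ * q.fst) t := by
  refine ((hasDerivAt_barrier hc ht x).const_mul θ).add ?_
  have h := (hasGradientAt_quadPoly_comp q X r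
    (rescale a e ∘L ContinuousLinearMap.inl ℝ ℝ (Eucl n)) t t).hasDerivAt'
  have h2 : (rescale a e ∘L ContinuousLinearMap.inl ℝ ℝ (Eucl n)).adjoint q = a⁻¹ * q.fst := by
    refine ext_inner_right ℝ fun s => ?_
    rw [ContinuousLinearMap.adjoint_inner_left, WithLp.prod_inner_apply]
    simp
    ring
  have h3 : quadGrad q X r (0 : TimeSpace n) = q := by simp [quadGrad]
  rw [sub_self, map_zero, h3, h2] at h
  refine h.congr_of_eventuallyEq (Eventually.of_forall fun s => ?_)
  simp

lemma hasGradientAt_touching (y : Eucl n) :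
    HasGradientAt (fun y => touching c t₁ θ a e q X r (t, x) (t, y))
      (θ • barrierGrad c t₁ t y +
        (spaceEmb n a e).adjoint (quadGrad q X r (spaceEmb n a e (y - x)))) y := by
  have h1 := hasGradientAt_barrier c t₁ t y
  have h2 := hasGradientAt_quadPoly_comp q X r (spaceEmb n a e) x y
  rw [hasGradientAt_iff_hasFDerivAt] at *
  refine ((h1.const_mul θ).add h2).congr_fderiv ?_ |>.congr_of_eventuallyEq
    (Eventually.of_forall fun s => ?_)
  · simp
  · simp [touching, spaceEmb]

lemma hasFDerivAt_touching_grad :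
    HasFDerivAt (fun y => θ • barrierGrad c t₁ t y +
        (spaceEmb n a e).adjoint (quadGrad q X r (spaceEmb n a e (y - x))))
      (θ • barrierHess c t₁ t x + quadHess a e X r) x :=
  ((hasFDerivAt_barrierGrad c t₁ t x).const_smul θ).add
    (hasFDerivAt_quadGrad_comp q X r (spaceEmb n a e) x)

lemma touching_grad_self :
    θ • barrierGrad c t₁ t x +
        (spaceEmb n a e).adjoint (quadGrad q X r (spaceEmb n a e (x - x))) =
      θ • barrierGrad c t₁ t x + e⁻¹ • q.snd := by
  rw [sub_self, map_zero]
  have h3 : quadGrad q X r (0 : TimeSpace n) = q := by simp [quadGrad]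
  rw [h3, spaceEmb_adjoint]

include hc ht in
theorem IsViscositySubsolution.ineq_of_touching {T : ℝ}
    {G : ℝ → Eucl n → ℝ → Eucl n → Matrix (Fin n) (Fin n) ℝ → ℝ} {g₀ : Eucl n → ℝ}
    {w : ℝ → Eucl n → ℝ} (hw : IsViscositySubsolution T G g₀ w) (htT : t ∈ Set.Ico (0 : ℝ) T)
    (hmax : IsLocalMaxOn (fun p : ℝ × Eucl n => w p.1 p.2 - touching c t₁ θ a e q X r (t, x) p)
      (Set.Icc (0 : ℝ) T ×ˢ (Set.univ : Set (Eucl n))) (t, x)) :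
    0 ≤ θ * barrierTime c t₁ t x + a⁻¹ * q.fst +
      G t x 0 (θ • barrierGrad c t₁ t x + e⁻¹ • q.snd)
        (formMatrix (θ • barrierHess c t₁ t x + quadHess a e X r)) := by
  have h := hw.ineq_of_contDiffAt htT (contDiffAt_touching hc ht x θ a e q X r) hmax
    (hasDerivAt_touching hc ht x θ a e q X r)
    (Eventually.of_forall (hasGradientAt_touching x θ a e q X r))
    (hasFDerivAt_touching_grad x θ a e q X r) 0
  rwa [touching_grad_self] at h

include hc ht in
theorem IsViscositySupersolution.ineq_of_touching {T : ℝ}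
    {G : ℝ → Eucl n → ℝ → Eucl n → Matrix (Fin n) (Fin n) ℝ → ℝ} {g₀ : Eucl n → ℝ}
    {w : ℝ → Eucl n → ℝ} (hw : IsViscositySupersolution T G g₀ w) (htT : t ∈ Set.Ico (0 : ℝ) T)
    (hmin : IsLocalMinOn (fun p : ℝ × Eucl n => w p.1 p.2 - touching c t₁ θ a e q X r (t, x) p)
      (Set.Icc (0 : ℝ) T ×ˢ (Set.univ : Set (Eucl n))) (t, x)) :
    θ * barrierTime c t₁ t x + a⁻¹ * q.fst +
      G t x 0 (θ • barrierGrad c t₁ t x + e⁻¹ • q.snd)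
        (formMatrix (θ • barrierHess c t₁ t x + quadHess a e X r)) ≤ 0 := by
  have h := hw.ineq_of_contDiffAt htT (contDiffAt_touching hc ht x θ a e q X r) hmin
    (hasDerivAt_touching hc ht x θ a e q X r)
    (Eventually.of_forall (hasGradientAt_touching x θ a e q X r))
    (hasFDerivAt_touching_grad x θ a e q X r) 0
  rwa [touching_grad_self] at h

end Jets

section Hamiltonian

variable {n d : ℕ} {U V : Type*}

lemma iSup_iInf_le_add [Nonempty U] [Nonempty V] {I I' : U → V → ℝ} {B m : ℝ}
    (hI : ∀ u v, |I u v| ≤ B) (hI' : ∀ u v, |I' u v| ≤ B) (h : ∀ u v, I u v ≤ I' u v + m) :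
    ⨆ u, ⨅ v, I u v ≤ (⨆ u, ⨅ v, I' u v) + m := by
  obtain ⟨v₀⟩ := ‹Nonempty V›
  have hbdd : ∀ {I : U → V → ℝ}, (∀ u v, |I u v| ≤ B) → ∀ u, BddBelow (Set.range (I u)) :=
    fun hI u => ⟨-B, by rintro _ ⟨v, rfl⟩; exact (abs_le.1 (hI u v)).1⟩
  refine ciSup_le fun u => ?_
  have h1 : (⨅ v, I u v) - m ≤ ⨅ v, I' u v := by
    let _ : Nonempty V := ⟨v₀⟩
    refine le_ciInf fun v => ?_
    have := ciInf_le (hbdd hI u) v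
    linarith [h u v]
  have h2 : (⨅ v, I' u v) ≤ ⨆ u, ⨅ v, I' u v := by
    refine le_ciSup (f := fun u => ⨅ v, I' u v) ⟨B, ?_⟩ u
    rintro _ ⟨u', rfl⟩
    exact (ciInf_le (hbdd hI' u') v₀).trans (abs_le.1 (hI' u' v₀)).2
  linarith

lemma abs_integrand_le {S : Matrix (Fin n) (Fin d) ℝ} {b : Eucl n} {g : Eucl d → ℝ} {B C : ℝ}
    (hS : ‖S‖ ≤ B) (hb : ‖b‖ ≤ B) (hg0 : |g 0| ≤ B) (hC : 0 ≤ C)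
    (hg : ∀ z z', |g z - g z'| ≤ C * ‖z - z'‖) (p : Eucl n) (A : Eucl n →L[ℝ] Eucl n) :
    |(1 / 2) * Matrix.trace (S * Sᵀ * formMatrix A) + ⟪p, b⟫ + g (rowMul p S)| ≤
      ‖A‖ * B ^ 2 + ‖p‖ * B + (B + C * (‖p‖ * B)) := by
  have hB : 0 ≤ B := (norm_nonneg _).trans hS
  have h1 : |Matrix.trace (S * Sᵀ * formMatrix A)| ≤ ‖A‖ * B ^ 2 := by
    rw [trace_mul_formMatrix]
    calc |∑ k, ⟪A (colVec S k), colVec S k⟫| ≤ ∑ k, |⟪A (colVec S k), colVec S k⟫| :=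
          Finset.abs_sum_le_sum_abs _ _
      _ ≤ ∑ k, ‖A‖ * ‖colVec S k‖ ^ 2 := by
          refine Finset.sum_le_sum fun k _ => (abs_real_inner_le_norm _ _).trans ?_
          rw [pow_two, ← mul_assoc]
          gcongr
          exact A.le_opNorm _
      _ = ‖A‖ * ‖S‖ ^ 2 := by rw [← Finset.mul_sum, sum_norm_colVec_sq]
      _ ≤ ‖A‖ * B ^ 2 := by gcongr
  have h2 : |⟪p, b⟫| ≤ ‖p‖ * B := (abs_real_inner_le_norm _ _).trans (by gcongr)
  have h3 : |g (rowMul p S) - g 0| ≤ C * (‖p‖ * B) := by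
    refine (hg _ _).trans ?_
    rw [sub_zero]
    gcongr
    exact (norm_rowMul_le p S).trans (by gcongr)
  have h0 : 0 ≤ ‖A‖ * B ^ 2 := by positivity
  rw [abs_le] at *
  constructor <;> linarith [h1.1, h1.2, h2.1, h2.2, h3.1, h3.2, hg0.1, hg0.2]

/-- Comparison of the integrands of the Hamiltonian at the two points produced by the doubling of
variables. -/
theorem integrand_sub_le {c t₁ t s a e r θ C₀ C B Dσ Db Df : ℝ} (hC₀ : 0 ≤ C₀) (hC : 0 ≤ C)
    (hc : 6 * C₀ ^ 2 + 4 * C₀ + 4 * C * C₀ + 1 ≤ c) (hlt : 1 ≤ (c * (t - t₁))⁻¹)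
    (hls : 1 ≤ (c * (s - t₁))⁻¹) (ha : 0 < a) (he : 0 < e) (hr : 0 ≤ r) (hθ : 0 ≤ θ)
    {x y : Eucl n} {q q' : TimeSpace n} {X Y : TimeSpace n →L[ℝ] TimeSpace n}
    (hq : ‖q - (1 / 3 : ℝ) • (rescale a e (t, x) - rescale a e (s, y))‖ ≤ r)
    (hq' : ‖q' - (1 / 3 : ℝ) • (rescale a e (t, x) - rescale a e (s, y))‖ ≤ r)
    (hXY : ∀ h k, ⟪X h, h⟫ - ⟪Y k, k⟫ ≤ ‖h - k‖ ^ 2)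
    {S S' : Matrix (Fin n) (Fin d) ℝ} {b b' : Eucl n} {g g' : Eucl d → ℝ}
    (hb : ‖b‖ ≤ C₀ * (1 + ‖x‖)) (hS : ‖S‖ ≤ C₀ * (1 + ‖x‖))
    (hb' : ‖b'‖ ≤ C₀ * (1 + ‖y‖)) (hS' : ‖S'‖ ≤ C₀ * (1 + ‖y‖))
    (hbB : ‖b‖ ≤ B) (hSB : ‖S‖ ≤ B) (hbB' : ‖b'‖ ≤ B) (hSB' : ‖S'‖ ≤ B)
    (hSS : ‖S - S'‖ ≤ Dσ) (hbb : ‖b - b'‖ ≤ Db)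
    (hg : ∀ z z', |g z - g z'| ≤ C * ‖z - z'‖) (hg' : ∀ z z', |g' z - g' z'| ≤ C * ‖z - z'‖)
    (hgg : g (rowMul ((3 * e ^ 2)⁻¹ • (x - y)) S) - g' (rowMul ((3 * e ^ 2)⁻¹ • (x - y)) S') ≤ Df) :
    (θ * barrierTime c t₁ t x + a⁻¹ * q.fst +
      ((1 / 2) * Matrix.trace (S * Sᵀ *
          formMatrix (θ • barrierHess c t₁ t x + quadHess a e X r)) +
        ⟪θ • barrierGrad c t₁ t x + e⁻¹ • q.snd, b⟫ +
        g (rowMul (θ • barrierGrad c t₁ t x + e⁻¹ • q.snd) S))) -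
    (-θ * barrierTime c t₁ s y + a⁻¹ * q'.fst +
      ((1 / 2) * Matrix.trace (S' * S'ᵀ *
          formMatrix (-θ • barrierHess c t₁ s y + quadHess a e Y (-r))) +
        ⟪-θ • barrierGrad c t₁ s y + e⁻¹ • q'.snd, b'⟫ +
        g' (rowMul (-θ • barrierGrad c t₁ s y + e⁻¹ • q'.snd) S'))) ≤
    -(2 * θ) + r * (2 * a⁻¹ + 2 * (e⁻¹ ^ 2 * B ^ 2) + 2 * (e⁻¹ * B) + 2 * (C * (e⁻¹ * B))) +
      1 / 2 * (e⁻¹ ^ 2 * Dσ ^ 2) + (3 * e ^ 2)⁻¹ * ‖x - y‖ * Db + Df := by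
  have hB : 0 ≤ B := (norm_nonneg _).trans hbB
  obtain ⟨p, hp⟩ : ∃ p : Eucl n, p = (3 * e ^ 2)⁻¹ • (x - y) := ⟨_, rfl⟩
  rw [← hp] at hgg
  have hpn : ‖p‖ = (3 * e ^ 2)⁻¹ * ‖x - y‖ := by
    rw [hp, norm_smul, Real.norm_eq_abs, abs_of_nonneg (by positivity)]
  have bar1 := mul_le_mul_of_nonneg_left
    (barrier_generator_le (d := d) hC₀ hC hc hlt x b S hb hS) hθ
  have bar2 := mul_le_mul_of_nonneg_left
    (barrier_generator_le (d := d) hC₀ hC hc hls y b' S' hb' hS') hθ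
  have comp : ∀ q : TimeSpace n,
      ‖q - (1 / 3 : ℝ) • (rescale a e (t, x) - rescale a e (s, y))‖ ≤ r →
      |q.fst - 1 / 3 * (a⁻¹ * t - a⁻¹ * s)| ≤ r ∧ ‖e⁻¹ • q.snd - p‖ ≤ e⁻¹ * r := by
    intro q hq
    constructor
    · exact (WithLp.norm_fst_le _ _).trans hq
    · have h1 : e⁻¹ • q.snd - p =
          e⁻¹ • (q - (1 / 3 : ℝ) • (rescale a e (t, x) - rescale a e (s, y))).snd := by
        simp only [WithLp.sub_snd, WithLp.smul_snd, rescale_snd, hp, smul_sub, smul_smul]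
        congr 1
        have h2 : (3 * e ^ 2)⁻¹ = e⁻¹ * (1 / 3 * e⁻¹) := by field_simp
        rw [h2]
      rw [h1, norm_smul, Real.norm_eq_abs, abs_of_nonneg (by positivity)]
      gcongr
      exact (WithLp.norm_snd_le _ _).trans hq
  obtain ⟨hqt, hqx⟩ := comp q hq
  obtain ⟨hqt', hqx'⟩ := comp q' hq'
  have time : a⁻¹ * q.fst - a⁻¹ * q'.fst ≤ a⁻¹ * (2 * r) := by
    rw [← mul_sub]
    gcongr
    linarith [(abs_le.1 hqt).2, (abs_le.1 hqt').1]
  have trace_eq : ∀ (S : Matrix (Fin n) (Fin d) ℝ) (H : Eucl n →L[ℝ] Eucl n) (θ r : ℝ)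
      (X : TimeSpace n →L[ℝ] TimeSpace n),
      Matrix.trace (S * Sᵀ * formMatrix (θ • H + quadHess a e X r)) =
        θ * ∑ k, ⟪H (colVec S k), colVec S k⟫ +
          ∑ k, ⟪X (spaceEmb n a e (colVec S k)), spaceEmb n a e (colVec S k)⟫ +
          2 * r * (e⁻¹ ^ 2 * ‖S‖ ^ 2) := by
    intro S H θ r X
    rw [trace_mul_formMatrix, ← sum_norm_colVec_sq, Finset.mul_sum, Finset.mul_sum,
      Finset.mul_sum, ← Finset.sum_add_distrib, ← Finset.sum_add_distrib]
    refine Finset.sum_congr rfl fun k _ => ?_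
    rw [add_apply, smul_apply, inner_add_left, real_inner_smul_left, inner_quadHess_eq]
    ring
  have sums : ∑ k, ⟪X (spaceEmb n a e (colVec S k)), spaceEmb n a e (colVec S k)⟫ -
      ∑ k, ⟪Y (spaceEmb n a e (colVec S' k)), spaceEmb n a e (colVec S' k)⟫ ≤
      e⁻¹ ^ 2 * Dσ ^ 2 := by
    have h1 : ‖S - S'‖ ^ 2 ≤ Dσ ^ 2 := by gcongr
    rw [← Finset.sum_sub_distrib]
    refine le_trans ?_ (mul_le_mul_of_nonneg_left h1 (sq_nonneg _))
    rw [← sum_norm_colVec_sq, Finset.mul_sum]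
    refine Finset.sum_le_sum fun k _ => (hXY _ _).trans_eq ?_
    rw [← map_sub, norm_spaceEmb_sq, colVec_sub]
  have hSq : ‖S‖ ^ 2 ≤ B ^ 2 := by gcongr
  have hSq' : ‖S'‖ ^ 2 ≤ B ^ 2 := by gcongr
  have hre : 0 ≤ r * e⁻¹ ^ 2 := by positivity
  have rS := mul_le_mul_of_nonneg_left hSq hre
  have rS' := mul_le_mul_of_nonneg_left hSq' hre
  have hpb : ⟪p, b⟫ - ⟪p, b'⟫ ≤ ‖p‖ * Db := by
    rw [← inner_sub_right]
    exact (real_inner_le_norm _ _).trans (by gcongr)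
  have split : ∀ (θ : ℝ) (v w : Eucl n), θ • v + w = p + (θ • v + (w - p)) := by
    intro θ v w; abel
  have inner1 : ⟪θ • barrierGrad c t₁ t x + e⁻¹ • q.snd, b⟫ ≤
      ⟪p, b⟫ + θ * ⟪barrierGrad c t₁ t x, b⟫ + e⁻¹ * r * B := by
    rw [split, inner_add_left, inner_add_left, real_inner_smul_left]
    have : ⟪e⁻¹ • q.snd - p, b⟫ ≤ e⁻¹ * r * B :=
      (real_inner_le_norm _ _).trans (mul_le_mul hqx hbB (norm_nonneg _) (by positivity))
    linarith
  have inner2 : ⟪p, b'⟫ - θ * ⟪barrierGrad c t₁ s y, b'⟫ - e⁻¹ * r * B ≤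
      ⟪-θ • barrierGrad c t₁ s y + e⁻¹ • q'.snd, b'⟫ := by
    rw [split, inner_add_left, inner_add_left, real_inner_smul_left]
    have := (abs_real_inner_le_norm (e⁻¹ • q'.snd - p) b').trans
      (mul_le_mul hqx' hbB' (norm_nonneg _) (by positivity))
    linarith [(abs_le.1 this).1]
  have row : ∀ (S : Matrix (Fin n) (Fin d) ℝ) (v w : Eucl n) (θ' : ℝ), |θ'| = θ → ‖S‖ ≤ B →
      ‖w - p‖ ≤ e⁻¹ * r →
      ‖rowMul (θ' • v + w) S - rowMul p S‖ ≤ θ * (‖v‖ * ‖S‖) + e⁻¹ * r * B := by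
    intro S v w θ' hθ' hSB hw
    rw [← rowMul_sub_left, split, add_sub_cancel_left]
    refine (norm_rowMul_le _ _).trans ?_
    have h1 : ‖θ' • v + (w - p)‖ ≤ θ * ‖v‖ + e⁻¹ * r := by
      refine (norm_add_le _ _).trans ?_
      rw [norm_smul, Real.norm_eq_abs, hθ']
      gcongr
    have h2 : e⁻¹ * r * ‖S‖ ≤ e⁻¹ * r * B := by gcongr
    linarith [mul_le_mul_of_nonneg_right h1 (norm_nonneg S)]
  have g1 := (hg _ _).trans (mul_le_mul_of_nonneg_left
    (row S (barrierGrad c t₁ t x) (e⁻¹ • q.snd) θ (abs_of_nonneg hθ) hSB hqx) hC)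
  have g2 := (hg' _ _).trans (mul_le_mul_of_nonneg_left
    (row S' (barrierGrad c t₁ s y) (e⁻¹ • q'.snd) (-θ) (by rw [abs_neg, abs_of_nonneg hθ]) hSB'
      hqx') hC)
  have g1' := (abs_le.1 g1).2
  have g2' := (abs_le.1 g2).1
  rw [trace_eq, trace_eq]
  rw [← hpn]
  linarith

end Hamiltonian

section Doubling

open Filter Topology

/-- Doubling of variables with anisotropic penalization of a pair of continuous functions on a
compact set: there are approximate maximum points carrying ordered approximate second order
jets. -/
theorem exists_doubling {n : ℕ} {K : Set (ℝ × Eucl n)} (hK : IsCompact K) (hne : K.Nonempty)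
    {w₁ w₂ : ℝ × Eucl n → ℝ} (h₁ : ContinuousOn w₁ K) (h₂ : ContinuousOn w₂ K) {a e r : ℝ}
    (ha : 0 < a) (he : 0 < e) (hr : 0 < r) :
    ∃ ξ ∈ K, ∃ η ∈ K, ∃ (q q' : TimeSpace n) (X Y : TimeSpace n →L[ℝ] TimeSpace n),
      ‖q - (1 / 3 : ℝ) • (rescale a e ξ - rescale a e η)‖ ≤ r ∧
      ‖q' - (1 / 3 : ℝ) • (rescale a e ξ - rescale a e η)‖ ≤ r ∧
      (∀ ξ' ∈ K, ∀ η' ∈ K,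
        w₁ ξ' - w₂ η' - (1 / 6) * ‖rescale a e ξ' - rescale a e η'‖ ^ 2 - r ≤
          w₁ ξ - w₂ η - (1 / 6) * ‖rescale a e ξ - rescale a e η‖ ^ 2) ∧
      (∀ᶠ z in 𝓝 ξ, z ∈ K → w₁ z ≤ w₁ ξ + quadPoly q X r (rescale a e (z - ξ))) ∧
      (∀ᶠ z in 𝓝 η, z ∈ K → w₂ η + quadPoly q' Y (-r) (rescale a e (z - η)) ≤ w₂ z) ∧
      ∀ h k, ⟪X h, h⟫ - ⟪Y k, k⟫ ≤ ‖h - k‖ ^ 2 := by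
  let R : (ℝ × Eucl n) →L[ℝ] TimeSpace n := rescale a e
  let Q : TimeSpace n → ℝ × Eucl n := fun z => (a * z.fst, e • z.snd)
  have hQR : ∀ z, Q (R z) = z := by
    intro z
    refine Prod.ext ?_ ?_
    · change a * (a⁻¹ * z.1) = z.1
      field_simp
    · change e • (e⁻¹ • z.2) = z.2
      rw [smul_smul, mul_inv_cancel₀ he.ne', one_smul]
  have hQ : Continuous Q := by
    refine (continuous_const.mul ?_).prodMk (Continuous.const_smul ?_ e)
    · exact continuous_fst.comp (WithLp.prod_continuous_ofLp 2 ℝ (Eucl n))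
    · exact continuous_snd.comp (WithLp.prod_continuous_ofLp 2 ℝ (Eucl n))
  have hQK : Set.MapsTo Q (R '' K) K := by
    rintro _ ⟨z, hz, rfl⟩
    rwa [hQR]
  obtain ⟨_, ⟨ξ, hξ, rfl⟩, _, ⟨η, hη, rfl⟩, q, q', X, Y, δ, hδ, hq, hq', hmax, hX, hY, hXY⟩ :=
    theorem_on_sums (hK.image R.continuous) (hne.image R) (h₁.comp hQ.continuousOn hQK)
      (h₂.comp hQ.continuousOn hQK) hr
  simp only [Function.comp_apply, hQR] at hmax hX hY
  have hsmall : ∀ ξ : ℝ × Eucl n, ∀ᶠ z in 𝓝 ξ, ‖R (z - ξ)‖ < δ := by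
    intro ξ
    have h : ContinuousAt (fun z => ‖R (z - ξ)‖) ξ := by fun_prop
    refine h.eventually_lt continuousAt_const ?_
    simpa using hδ
  have hadd : ∀ z ξ : ℝ × Eucl n, R ξ + R (z - ξ) = R z := by
    intro z ξ
    rw [← map_add, add_sub_cancel]
  refine ⟨ξ, hξ, η, hη, q, q', X, Y, hq, hq', ?_, ?_, ?_, hXY⟩
  · intro ξ' hξ' η' hη'
    have := hmax (R ξ') ⟨ξ', hξ', rfl⟩ (R η') ⟨η', hη', rfl⟩
    rwa [hQR, hQR] at this
  · filter_upwards [hsmall ξ] with z hz hzK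
    have := hX (R (z - ξ)) hz (by rw [hadd]; exact ⟨z, hzK, rfl⟩)
    rw [hadd, hQR] at this
    refine this.trans_eq ?_
    simp only [quadPoly, R]
    ring
  · filter_upwards [hsmall η] with z hz hzK
    have := hY (R (z - η)) hz (by rw [hadd]; exact ⟨z, hzK, rfl⟩)
    rw [hadd, hQR] at this
    refine le_trans (le_of_eq ?_) this
    simp only [quadPoly, R]
    ring

lemma norm_rescale_sub_sq {n : ℕ} (a e : ℝ) (ξ η : ℝ × Eucl n) :
    ‖rescale a e ξ - rescale a e η‖ ^ 2 =
      (a⁻¹ * (ξ.1 - η.1)) ^ 2 + (e⁻¹ * ‖ξ.2 - η.2‖) ^ 2 := by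
  rw [← map_sub, WithLp.prod_norm_sq_eq_of_L2, rescale_fst, rescale_snd, norm_smul, mul_pow,
    mul_pow, Real.norm_eq_abs, Real.norm_eq_abs, sq_abs, sq_abs]
  simp [mul_pow]

end Doubling

section Coefficients

variable {n d : ℕ} {U V : Type*} [MetricSpace U] [CompactSpace U] [MetricSpace V] [CompactSpace V]

/-- Regularity of the coefficients with all the constants equal to `C`. -/
structure RegularCoefficients (T C : ℝ) (b : ℝ → Eucl n → U → V → Eucl n)
    (σ : ℝ → Eucl n → U → V → Matrix (Fin n) (Fin d) ℝ)
    (f : ℝ → Eucl n → ℝ → Eucl d → U → V → ℝ) : Prop where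
  nonneg : 0 ≤ C
  b_cont : ∀ x : Eucl n, ContinuousOn (fun q : ℝ × U × V => b q.1 x q.2.1 q.2.2)
    (Set.Icc (0 : ℝ) T ×ˢ (Set.univ : Set (U × V)))
  σ_cont : ∀ x : Eucl n, ContinuousOn (fun q : ℝ × U × V => σ q.1 x q.2.1 q.2.2)
    (Set.Icc (0 : ℝ) T ×ˢ (Set.univ : Set (U × V)))
  f_cont : ∀ (x : Eucl n) (z : Eucl d), ContinuousOn
    (fun q : ℝ × U × V => f q.1 x 0 z q.2.1 q.2.2)
    (Set.Icc (0 : ℝ) T ×ˢ (Set.univ : Set (U × V)))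
  b_lip : ∀ t ∈ Set.Icc (0 : ℝ) T, ∀ (x x' : Eucl n) (u : U) (v : V),
    ‖b t x u v - b t x' u v‖ ≤ C * ‖x - x'‖
  σ_lip : ∀ t ∈ Set.Icc (0 : ℝ) T, ∀ (x x' : Eucl n) (u : U) (v : V),
    ‖σ t x u v - σ t x' u v‖ ≤ C * ‖x - x'‖
  f_lip : ∀ t ∈ Set.Icc (0 : ℝ) T, ∀ (x x' : Eucl n) (z z' : Eucl d) (u : U) (v : V),
    |f t x 0 z u v - f t x' 0 z' u v| ≤ C * (‖x - x'‖ + ‖z - z'‖)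
  b_growth : ∀ t ∈ Set.Icc (0 : ℝ) T, ∀ (x : Eucl n) (u : U) (v : V),
    ‖b t x u v‖ ≤ C * (1 + ‖x‖)
  σ_growth : ∀ t ∈ Set.Icc (0 : ℝ) T, ∀ (x : Eucl n) (u : U) (v : V),
    ‖σ t x u v‖ ≤ C * (1 + ‖x‖)

lemma exists_bound_of_continuousOn_Icc {M : Type*} [SeminormedAddCommGroup M] {T : ℝ}
    {g : ℝ → U → V → M} (hg : ContinuousOn (fun q : ℝ × U × V => g q.1 q.2.1 q.2.2)
      (Set.Icc (0 : ℝ) T ×ˢ (Set.univ : Set (U × V)))) :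
    ∃ B, ∀ t ∈ Set.Icc (0 : ℝ) T, ∀ u v, ‖g t u v‖ ≤ B := by
  obtain ⟨B, hB⟩ := (isCompact_Icc.prod isCompact_univ).exists_bound_of_continuousOn hg
  exact ⟨B, fun t ht u v => hB (t, u, v) ⟨ht, Set.mem_univ _⟩⟩

/-- A function continuous in `(t, u, v)` and uniformly Lipschitz in a parameter is uniformly
continuous in time, locally uniformly in the parameter. -/
lemma exists_time_modulus {M P : Type*} [SeminormedAddCommGroup M] [SeminormedAddCommGroup P]
    {T C : ℝ} {g : ℝ → P → U → V → M} (hC : 0 ≤ C)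
    (hg : ∀ p, ContinuousOn (fun q : ℝ × U × V => g q.1 p q.2.1 q.2.2)
      (Set.Icc (0 : ℝ) T ×ˢ (Set.univ : Set (U × V))))
    (hlip : ∀ t ∈ Set.Icc (0 : ℝ) T, ∀ p p' u v, ‖g t p u v - g t p' u v‖ ≤ C * ‖p - p'‖)
    {S : Set P} (hS : IsCompact S) {ε : ℝ} (hε : 0 < ε) :
    ∃ δ > 0, ∀ t ∈ Set.Icc (0 : ℝ) T, ∀ s ∈ Set.Icc (0 : ℝ) T, |t - s| < δ →
      ∀ p ∈ S, ∀ u v, ‖g t p u v - g s p u v‖ ≤ ε := by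
  have hcont : ContinuousOn (fun q : P × ℝ × U × V => g q.2.1 q.1 q.2.2.1 q.2.2.2)
      (S ×ˢ (Set.Icc (0 : ℝ) T ×ˢ (Set.univ : Set (U × V)))) := by
    refine continuousOn_prod_of_continuousOn_lipschitzOnWith _ C.toNNReal (fun p _ => hg p) ?_
    rintro ⟨t, u, v⟩ ⟨ht, -⟩
    refine LipschitzOnWith.of_dist_le_mul fun p _ p' _ => ?_
    rw [Real.coe_toNNReal _ hC, dist_eq_norm, dist_eq_norm]
    exact hlip t ht p p' u v
  have huc := (hS.prod (isCompact_Icc.prod isCompact_univ)).uniformContinuousOn_of_continuous hcont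
  obtain ⟨δ, hδ, h⟩ := Metric.uniformContinuousOn_iff.1 huc ε hε
  refine ⟨δ, hδ, fun t ht s hs hts p hp u v => ?_⟩
  have := h (p, t, u, v) ⟨hp, ht, Set.mem_univ _⟩ (p, s, u, v) ⟨hp, hs, Set.mem_univ _⟩ (by
    simpa [Prod.dist_eq, Real.dist_eq, hδ] using hts)
  rw [dist_eq_norm] at this
  exact this.le

end Coefficients

section Weights

open Filter Topology

variable {n : ℕ}

/-- The sublevel set of the barrier where the doubling of variables takes place. -/
def barrierRegion (n : ℕ) (c t₁ T' l : ℝ) : Set (ℝ × Eucl n) :=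
  {p | p.1 ∈ Set.Icc 0 T' ∧ logWeight (‖p.2‖ ^ 2) ^ 2 ≤ l * (c * (p.1 - t₁))}

lemma norm_le_exp_of_logWeight_le {x : Eucl n} {R : ℝ} (h : logWeight (‖x‖ ^ 2) ≤ R) :
    ‖x‖ ≤ Real.exp R := by
  have h1 : Real.log (1 + ‖x‖ ^ 2) ≤ 2 * R := by
    unfold logWeight at h
    linarith
  have h2 := (Real.log_le_iff_le_exp (by positivity)).1 h1
  refine abs_le_of_sq_le_sq' ?_ (Real.exp_pos R).le |>.2
  rw [← Real.exp_nat_mul]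
  push_cast
  linarith

lemma continuous_logWeight_norm_sq : Continuous fun x : Eucl n => logWeight (‖x‖ ^ 2) := by
  have h : Continuous fun x : Eucl n => 1 + ‖x‖ ^ 2 := by fun_prop
  exact ((h.log fun x => by positivity).div_const 2).add continuous_const

lemma isCompact_barrierRegion {c t₁ T' l : ℝ} (hc : 0 ≤ c) (hl : 0 ≤ l) :
    IsCompact (barrierRegion n c t₁ T' l) := by
  refine ((isCompact_Icc (a := 0) (b := T')).prod (isCompact_closedBall (0 : Eucl n)
    (Real.exp (l * (c * (T' - t₁)) + 1)))).of_isClosed_subset ?_ ?_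
  · have h : Continuous fun p : ℝ × Eucl n => l * (c * (p.1 - t₁)) := by fun_prop
    exact (isClosed_Icc.preimage continuous_fst).inter
      (isClosed_le ((continuous_logWeight_norm_sq.comp continuous_snd).pow 2) h)
  · rintro ⟨t, x⟩ ⟨ht, hx⟩
    refine ⟨ht, ?_⟩
    rw [mem_closedBall_zero_iff]
    refine norm_le_exp_of_logWeight_le ?_
    have h1 : l * (c * (t - t₁)) ≤ l * (c * (T' - t₁)) := by
      gcongr
      exact ht.2
    simp only at hx
    nlinarith [sq_nonneg (logWeight (‖x‖ ^ 2) - 1)]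

lemma lt_of_mem_barrierRegion {c t₁ T' l : ℝ} (hc : 0 < c) (hl : 0 < l) {p : ℝ × Eucl n}
    (hp : p ∈ barrierRegion n c t₁ T' l) : t₁ < p.1 := by
  have h1 := one_le_logWeight (sq_nonneg ‖p.2‖)
  by_contra! h
  have h2 : l * (c * (p.1 - t₁)) ≤ 0 :=
    mul_nonpos_of_nonneg_of_nonpos hl.le (mul_nonpos_of_nonneg_of_nonpos hc.le (by linarith))
  nlinarith [hp.2]

lemma mem_barrierRegion_iff {c t₁ T' l : ℝ} (hc : 0 < c) {p : ℝ × Eucl n} (hp : t₁ < p.1) :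
    p ∈ barrierRegion n c t₁ T' l ↔ p.1 ∈ Set.Icc 0 T' ∧ barrier c t₁ p ≤ Real.exp l := by
  have h : 0 < c * (p.1 - t₁) := mul_pos hc (sub_pos.2 hp)
  unfold barrierRegion barrier
  rw [Set.mem_ofPred_eq, Real.exp_le_exp, inv_mul_le_iff₀ h, mul_comm l]

lemma continuousOn_barrier {c t₁ T' l : ℝ} (hc : 0 < c) (hl : 0 < l) :
    ContinuousOn (barrier c t₁) (barrierRegion n c t₁ T' l) := fun p hp =>
  (contDiffAt_barrier hc (lt_of_mem_barrierRegion hc hl hp) p.2).continuousAt.continuousWithinAt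

lemma barrierRegion_mem_nhdsWithin {c t₁ T' T l : ℝ} (hc : 0 < c) {p : ℝ × Eucl n}
    (hp1 : t₁ < p.1) (hpT : p.1 < T') (hp : barrier c t₁ p < Real.exp l) :
    barrierRegion n c t₁ T' l ∈ 𝓝[Set.Icc 0 T ×ˢ Set.univ] p := by
  have h1 : ∀ᶠ z : ℝ × Eucl n in 𝓝 p, t₁ < z.1 :=
    continuousAt_const.eventually_lt continuousAt_fst hp1
  have h2 : ∀ᶠ z : ℝ × Eucl n in 𝓝 p, z.1 < T' :=
    continuousAt_fst.eventually_lt continuousAt_const hpT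
  have h3 : ∀ᶠ z : ℝ × Eucl n in 𝓝 p, barrier c t₁ z < Real.exp l :=
    (contDiffAt_barrier hc hp1 p.2).continuousAt.eventually_lt continuousAt_const hp
  filter_upwards [mem_nhdsWithin_of_mem_nhds h1, mem_nhdsWithin_of_mem_nhds h2,
    mem_nhdsWithin_of_mem_nhds h3, self_mem_nhdsWithin] with z hz1 hz2 hz3 hz
  exact (mem_barrierRegion_iff hc hz1).2 ⟨⟨hz.1.1, le_of_lt hz2⟩, le_of_lt hz3⟩

/-- The growth condition of the class `Θ` in terms of the logarithmic weight. -/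
lemma MemTheta.exists_abs_le {T : ℝ} {φ : ℝ → Eucl n → ℝ} (hφ : MemTheta T φ) :
    ∃ A C : ℝ, 1 ≤ A ∧ 0 ≤ C ∧ ∀ t ∈ Set.Icc (0 : ℝ) T, ∀ x : Eucl n,
      |φ t x| ≤ C * Real.exp (A * logWeight (‖x‖ ^ 2) ^ 2) := by
  obtain ⟨hcont, A, hA, h⟩ := hφ
  obtain ⟨R, hR⟩ := h 1 one_pos
  obtain ⟨C, hC⟩ :=
    (isCompact_Icc.prod (isCompact_closedBall (0 : Eucl n) R)).exists_bound_of_continuousOn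
      (hcont.mono (Set.prod_mono_right (Set.subset_univ _)))
  refine ⟨max A 1, max C 1, le_max_right _ _, by positivity, fun t ht x => ?_⟩
  rcases le_total R ‖x‖ with hx | hx
  · have h1 := hR t ht x hx
    have hlog : Real.log ((‖x‖ ^ 2 + 1) ^ ((1 : ℝ) / 2)) = logWeight (‖x‖ ^ 2) - 1 := by
      rw [Real.log_rpow (by positivity), logWeight, add_comm (‖x‖ ^ 2)]
      ring
    have hL := one_le_logWeight (sq_nonneg ‖x‖)
    rw [hlog, neg_mul, Real.exp_neg, ← div_eq_mul_inv, div_le_iff₀ (Real.exp_pos _), one_mul] at h1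
    refine h1.trans ?_
    have h2 : Real.exp (A * (logWeight (‖x‖ ^ 2) - 1) ^ 2) ≤
        Real.exp (max A 1 * logWeight (‖x‖ ^ 2) ^ 2) := by
      gcongr
      · exact le_max_left _ _
      · linarith
    exact h2.trans (le_mul_of_one_le_left (Real.exp_pos _).le (le_max_right _ _))
  · have h1 := hC (t, x) ⟨ht, by rwa [mem_closedBall_zero_iff]⟩
    rw [Real.norm_eq_abs] at h1
    refine h1.trans ((le_max_left _ _).trans (le_mul_of_one_le_right (by positivity) ?_))
    exact Real.one_le_exp (by positivity)

end Weights

section Comparison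

open Filter Topology

variable {n d : ℕ} {U V : Type*} [MetricSpace U] [CompactSpace U] [Nonempty U]
  [MetricSpace V] [CompactSpace V] [Nonempty V] {T C : ℝ} {b : ℝ → Eucl n → U → V → Eucl n}
  {σ : ℝ → Eucl n → U → V → Matrix (Fin n) (Fin d) ℝ}
  {f : ℝ → Eucl n → ℝ → Eucl d → U → V → ℝ} {u₁ u₂ : ℝ → Eucl n → ℝ} {Φ₁ Φ₂ : Eucl n → ℝ}

lemma sub_le_sub_sub_of_add_sub_add_le {p q p' q' m : ℝ} (h : p + q - (p' + q') ≤ m) :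
    q - q' ≤ m - (p - p') := by
  linarith

/-- The viscosity inequalities at a pair of points carrying ordered second order jets of the
penalized sub- and supersolution. -/
theorem RegularCoefficients.le_of_touching (H : RegularCoefficients T C b σ f)
    (hsub : IsViscositySubsolution T (lowerHamiltonian b σ f) Φ₁ u₁)
    (hsuper : IsViscositySupersolution T (lowerHamiltonian b σ f) Φ₂ u₂)
    {c t₁ t s a e r θ B D Df : ℝ} {x y : Eucl n}
    (hc : 6 * C ^ 2 + 4 * C + 4 * C * C + 1 ≤ c) (ht : t ∈ Set.Ico 0 T) (hs : s ∈ Set.Ico 0 T)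
    (ht₁ : t₁ < t) (hs₁ : t₁ < s) (hlt : 1 ≤ (c * (t - t₁))⁻¹) (hls : 1 ≤ (c * (s - t₁))⁻¹)
    (ha : 0 < a) (he : 0 < e) (hr : 0 ≤ r) (hθ : 0 ≤ θ)
    {q q' : TimeSpace n} {X Y : TimeSpace n →L[ℝ] TimeSpace n}
    (hq : ‖q - (1 / 3 : ℝ) • (rescale a e (t, x) - rescale a e (s, y))‖ ≤ r)
    (hq' : ‖q' - (1 / 3 : ℝ) • (rescale a e (t, x) - rescale a e (s, y))‖ ≤ r)
    (hXY : ∀ h k, ⟪X h, h⟫ - ⟪Y k, k⟫ ≤ ‖h - k‖ ^ 2)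
    (hmax : IsLocalMaxOn (fun p : ℝ × Eucl n => u₁ p.1 p.2 - touching c t₁ θ a e q X r (t, x) p)
      (Set.Icc (0 : ℝ) T ×ˢ (Set.univ : Set (Eucl n))) (t, x))
    (hmin : IsLocalMinOn
      (fun p : ℝ × Eucl n => u₂ p.1 p.2 - touching c t₁ (-θ) a e q' Y (-r) (s, y) p)
      (Set.Icc (0 : ℝ) T ×ˢ (Set.univ : Set (Eucl n))) (s, y))
    (hx : C * (1 + ‖x‖) ≤ B) (hy : C * (1 + ‖y‖) ≤ B)
    (hσ : ∀ u v, ‖σ t x u v - σ s y u v‖ ≤ D) (hb : ∀ u v, ‖b t x u v - b s y u v‖ ≤ D)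
    (hf : ∀ u v, f t x 0 (rowMul ((3 * e ^ 2)⁻¹ • (x - y)) (σ t x u v)) u v -
      f s y 0 (rowMul ((3 * e ^ 2)⁻¹ • (x - y)) (σ s y u v)) u v ≤ Df) :
    2 * θ ≤ r * (2 * a⁻¹ + 2 * (e⁻¹ ^ 2 * B ^ 2) + 2 * (e⁻¹ * B) + 2 * (C * (e⁻¹ * B))) +
      1 / 2 * (e⁻¹ ^ 2 * D ^ 2) + (3 * e ^ 2)⁻¹ * ‖x - y‖ * D + Df := by
  have hC := H.nonneg
  have hc0 : 0 < c := by nlinarith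
  have htI := Set.Ico_subset_Icc_self ht
  have hsI := Set.Ico_subset_Icc_self hs
  have h1 := hsub.ineq_of_touching hc0 ht₁ x θ a e q X r ht hmax
  have h2 := hsuper.ineq_of_touching hc0 hs₁ y (-θ) a e q' Y (-r) hs hmin
  obtain ⟨F₁, hF₁⟩ := exists_bound_of_continuousOn_Icc
    (g := fun t u v => f t x 0 0 u v) (H.f_cont x 0)
  obtain ⟨F₂, hF₂⟩ := exists_bound_of_continuousOn_Icc
    (g := fun t u v => f t y 0 0 u v) (H.f_cont y 0)
  have hflip : ∀ t ∈ Set.Icc (0 : ℝ) T, ∀ x u v z z',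
      |f t x 0 z u v - f t x 0 z' u v| ≤ C * ‖z - z'‖ := by
    intro t ht x u v z z'
    simpa using H.f_lip t ht x x z z' u v
  obtain ⟨B', hB'⟩ : ∃ B', B' = max B (max F₁ F₂) := ⟨_, rfl⟩
  have hBB' : B ≤ B' := hB' ▸ le_max_left _ _
  have hF₁' : F₁ ≤ B' := hB' ▸ (le_max_left _ _).trans (le_max_right _ _)
  have hF₂' : F₂ ≤ B' := hB' ▸ (le_max_right _ _).trans (le_max_right _ _)
  have bd1 := fun u v => abs_integrand_le (((H.σ_growth t htI x u v).trans hx).trans hBB')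
    (((H.b_growth t htI x u v).trans hx).trans hBB')
    ((hF₁ t htI u v).trans hF₁') hC (hflip t htI x u v)
    (θ • barrierGrad c t₁ t x + e⁻¹ • q.snd) (θ • barrierHess c t₁ t x + quadHess a e X r)
  have bd2 := fun u v => abs_integrand_le (((H.σ_growth s hsI y u v).trans hy).trans hBB')
    (((H.b_growth s hsI y u v).trans hy).trans hBB')
    ((hF₂ s hsI u v).trans hF₂') hC (hflip s hsI y u v)
    (-θ • barrierGrad c t₁ s y + e⁻¹ • q'.snd) (-θ • barrierHess c t₁ s y + quadHess a e Y (-r))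
  have key := fun u v => integrand_sub_le hC hC hc hlt hls ha he hr hθ hq hq' hXY
    (H.b_growth t htI x u v) (H.σ_growth t htI x u v) (H.b_growth s hsI y u v)
    (H.σ_growth s hsI y u v) ((H.b_growth t htI x u v).trans hx)
    ((H.σ_growth t htI x u v).trans hx) ((H.b_growth s hsI y u v).trans hy)
    ((H.σ_growth s hsI y u v).trans hy) (hσ u v) (hb u v) (hflip t htI x u v)
    (hflip s hsI y u v) (hf u v)
  have h3 := iSup_iInf_le_add (fun u v => (bd1 u v).trans (le_max_left _ _))
    (fun u v => (bd2 u v).trans (le_max_right _ _))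
    (fun u v => sub_le_iff_le_add'.1 (sub_le_sub_sub_of_add_sub_add_le (key u v)))
  unfold lowerHamiltonian at h1 h2
  linarith

end Comparison

section Penalization

open Filter Topology

/-- The penalization error is controlled by the smallness of the parameters. -/
lemma penalization_error_le {C κ e ρ ε D r Z : ℝ} (hC : 0 ≤ C) (he : 0 < e)
    (hκ : κ ≤ 1) (hρ0 : 0 ≤ ρ) (hρ : ρ ≤ κ) (hε0 : 0 ≤ ε) (hε : ε ≤ κ) (hεe : ε ≤ e * κ)
    (hρe : (3 * e ^ 2)⁻¹ * ρ ^ 2 ≤ κ) (hD : D = C * ρ + ε) (hr : r * Z ≤ κ) :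
    r * Z + 1 / 2 * (e⁻¹ ^ 2 * D ^ 2) + (3 * e ^ 2)⁻¹ * ρ * D +
      (C * (ρ + (3 * e ^ 2)⁻¹ * ρ * D) + ε) ≤ κ * (4 * C ^ 2 + 3 * C + 6) := by
  obtain ⟨α, hα⟩ : ∃ α, α = (3 * e ^ 2)⁻¹ := ⟨_, rfl⟩
  have hα0 : 0 ≤ α := by rw [hα]; positivity
  have hαe : e⁻¹ ^ 2 = 3 * α := by
    rw [hα]
    field_simp
  have hκ0 : 0 ≤ κ := hρ0.trans hρ
  rw [← hα] at hρe ⊢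
  rw [hαe]
  have h1 : α * ε ^ 2 ≤ κ := by
    calc α * ε ^ 2 ≤ α * (e * κ) ^ 2 := by gcongr
      _ = κ ^ 2 / 3 := by
        rw [hα]
        field_simp
      _ ≤ κ := by nlinarith
  have h2 : α * ρ * ε ≤ κ := by nlinarith [mul_nonneg hα0 (sq_nonneg (ρ - ε))]
  have h3 : 1 / 2 * (3 * α * D ^ 2) ≤ 3 * C ^ 2 * κ + 3 * κ := by
    have h4 : D ^ 2 ≤ 2 * (C ^ 2 * ρ ^ 2 + ε ^ 2) := by
      rw [hD]
      nlinarith [sq_nonneg (C * ρ - ε)]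
    have h5 := mul_le_mul_of_nonneg_left h4 hα0
    have h6 := mul_le_mul_of_nonneg_left hρe (sq_nonneg C)
    nlinarith
  have h4 : α * ρ * D ≤ (C + 1) * κ := by
    rw [hD]
    nlinarith [mul_le_mul_of_nonneg_left hρe hC]
  have h5 := mul_le_mul_of_nonneg_left h4 hC
  have h6 := mul_le_mul_of_nonneg_left hρ hC
  nlinarith

end Penalization

section Comparison

open Filter Topology

variable {n d : ℕ} {U V : Type*} [MetricSpace U] [CompactSpace U]
  [MetricSpace V] [CompactSpace V] {T C : ℝ} {b : ℝ → Eucl n → U → V → Eucl n}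
  {σ : ℝ → Eucl n → U → V → Matrix (Fin n) (Fin d) ℝ}
  {f : ℝ → Eucl n → ℝ → Eucl d → U → V → ℝ} {u₁ u₂ : ℝ → Eucl n → ℝ} {Φ₁ Φ₂ : Eucl n → ℝ}

/-- A common time modulus for the coefficients, locally uniformly in the parameters. -/
lemma RegularCoefficients.exists_modulus (H : RegularCoefficients T C b σ f) (R L : ℝ) {ε : ℝ}
    (hε : 0 < ε) :
    ∃ δ > 0, ∀ t ∈ Set.Icc (0 : ℝ) T, ∀ s ∈ Set.Icc (0 : ℝ) T, |t - s| < δ →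
      ∀ x : Eucl n, ‖x‖ ≤ R → ∀ u v, ‖b t x u v - b s x u v‖ ≤ ε ∧ ‖σ t x u v - σ s x u v‖ ≤ ε ∧
        ∀ z : Eucl d, ‖z‖ ≤ L → f t x 0 z u v - f s x 0 z u v ≤ ε := by
  obtain ⟨δ₁, hδ₁, h₁⟩ := exists_time_modulus (g := fun t x u v => b t x u v) H.nonneg H.b_cont
    H.b_lip (isCompact_closedBall 0 R) hε
  obtain ⟨δ₂, hδ₂, h₂⟩ := exists_time_modulus (g := fun t x u v => σ t x u v) H.nonneg H.σ_cont
    H.σ_lip (isCompact_closedBall 0 R) hε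
  obtain ⟨δ₃, hδ₃, h₃⟩ := exists_time_modulus
    (g := fun t (p : Eucl n × Eucl d) u v => f t p.1 0 p.2 u v) (C := C * 2)
    (mul_nonneg H.nonneg zero_le_two) (fun p => H.f_cont p.1 p.2)
    (fun t ht p p' u v => (H.f_lip t ht p.1 p'.1 p.2 p'.2 u v).trans (by
      rw [mul_assoc]
      refine mul_le_mul_of_nonneg_left ?_ H.nonneg
      linarith [norm_fst_le (p - p'), norm_snd_le (p - p'), Prod.fst_sub p p',
        Prod.snd_sub p p', congrArg norm (Prod.fst_sub p p'), congrArg norm (Prod.snd_sub p p')]))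
    ((isCompact_closedBall (0 : Eucl n) R).prod (isCompact_closedBall (0 : Eucl d) L)) hε
  refine ⟨min δ₁ (min δ₂ δ₃), by positivity, fun t ht s hs hts x hx u v => ?_⟩
  rw [lt_min_iff, lt_min_iff] at hts
  rw [← mem_closedBall_zero_iff] at hx
  refine ⟨h₁ t ht s hs hts.1 x hx u v, h₂ t ht s hs hts.2.1 x hx u v, fun z hz => ?_⟩
  rw [← mem_closedBall_zero_iff] at hz
  exact (le_abs_self _).trans (h₃ t ht s hs hts.2.2 (x, z) ⟨hx, hz⟩ u v)

end Comparison

section Comparison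

open Filter Topology

variable {n d : ℕ} {U V : Type*} [MetricSpace U] [CompactSpace U] [Nonempty U]
  [MetricSpace V] [CompactSpace V] [Nonempty V] {T C : ℝ} {b : ℝ → Eucl n → U → V → Eucl n}
  {σ : ℝ → Eucl n → U → V → Matrix (Fin n) (Fin d) ℝ}
  {f : ℝ → Eucl n → ℝ → Eucl d → U → V → ℝ} {u₁ u₂ : ℝ → Eucl n → ℝ} {Φ₁ Φ₂ : Eucl n → ℝ}

lemma barrier_pos (c t₁ : ℝ) (p : ℝ × Eucl n) : 0 < barrier c t₁ p := Real.exp_pos _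

lemma touching_self (c t₁ θ a e : ℝ) (q : TimeSpace n) (X : TimeSpace n →L[ℝ] TimeSpace n)
    (r : ℝ) (z : ℝ × Eucl n) : touching c t₁ θ a e q X r z z = θ * barrier c t₁ z := by
  simp [touching, quadPoly]

lemma abs_le_mul_of_inv_mul_sq_le {a τ N : ℝ} (ha : 0 < a) (hN : 0 ≤ N)
    (h : (a⁻¹ * τ) ^ 2 ≤ N ^ 2) : |τ| ≤ a * N := by
  rw [← div_le_iff₀' ha, div_eq_inv_mul]
  have := abs_le_of_sq_le_sq h hN
  rwa [abs_mul, abs_of_pos (inv_pos.2 ha)] at this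

lemma inv_three_mul_sq_mul_sq (e ρ : ℝ) :
    (3 * e ^ 2)⁻¹ * ρ ^ 2 = 2 * (1 / 6 * (e⁻¹ * ρ) ^ 2) := by
  rw [mul_inv, mul_pow, inv_pow]
  ring

lemma exists_pos_mul_le {N A B C : ℝ} (hN : 0 < N) (hA : 0 < A) (hB : 0 < B) (hC : 0 < C) :
    ∃ a, 0 < a ∧ a * N ≤ A ∧ a * N ≤ B ∧ a * N ≤ C := by
  refine ⟨min A (min B C) / N, by positivity, ?_⟩
  rw [div_mul_cancel₀ _ hN.ne']
  exact ⟨min_le_left _ _, (min_le_right _ _).trans (min_le_left _ _),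
    (min_le_right _ _).trans (min_le_right _ _)⟩

set_option maxHeartbeats 1000000 in
/-- Comparison on a sublevel set of the barrier, for the sub- and supersolution corrected by the
barrier, when the maximum cannot be approached on the lateral part of the boundary. -/
theorem RegularCoefficients.sub_le_add_barrier (H : RegularCoefficients T C b σ f)
    (hsub : IsViscositySubsolution T (lowerHamiltonian b σ f) Φ₁ u₁)
    (hsuper : IsViscositySupersolution T (lowerHamiltonian b σ f) Φ₂ u₂)
    (hu₁ : ContinuousOn (fun p : ℝ × Eucl n => u₁ p.1 p.2) (Set.Icc (0 : ℝ) T ×ˢ Set.univ))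
    (hu₂ : ContinuousOn (fun p : ℝ × Eucl n => u₂ p.1 p.2) (Set.Icc (0 : ℝ) T ×ˢ Set.univ))
    {c t₁ T' l θ : ℝ} (hc : 6 * C ^ 2 + 4 * C + 4 * C * C + 1 ≤ c) (hl : 0 < l) (hθ : 0 < θ)
    (hT' : T' ≤ T) (hct : c * (T' - t₁) ≤ 1) (hterm : ∀ x, u₁ T' x ≤ u₂ T' x)
    (hlat : ∀ ξ ∈ barrierRegion n c t₁ T' l, ∀ η ∈ barrierRegion n c t₁ T' l,
      Real.exp l ≤ barrier c t₁ ξ ∨ Real.exp l ≤ barrier c t₁ η →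
      u₁ ξ.1 ξ.2 - θ * barrier c t₁ ξ ≤ u₂ η.1 η.2 + θ * barrier c t₁ η)
    {z : ℝ × Eucl n} (hz : z ∈ barrierRegion n c t₁ T' l) :
    u₁ z.1 z.2 - θ * barrier c t₁ z ≤ u₂ z.1 z.2 + θ * barrier c t₁ z := by
  have hC := H.nonneg
  have hc0 : 0 < c := by nlinarith
  obtain ⟨K, hKdef⟩ : ∃ K, K = barrierRegion n c t₁ T' l := ⟨_, rfl⟩
  obtain ⟨w₁, hw₁⟩ : ∃ w₁ : ℝ × Eucl n → ℝ, w₁ = fun p => u₁ p.1 p.2 - θ * barrier c t₁ p :=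
    ⟨_, rfl⟩
  obtain ⟨w₂, hw₂⟩ : ∃ w₂ : ℝ × Eucl n → ℝ, w₂ = fun p => u₂ p.1 p.2 + θ * barrier c t₁ p :=
    ⟨_, rfl⟩
  have hw₁' : ∀ p : ℝ × Eucl n, u₁ p.1 p.2 - θ * barrier c t₁ p = w₁ p := fun p => by rw [hw₁]
  have hw₂' : ∀ p : ℝ × Eucl n, u₂ p.1 p.2 + θ * barrier c t₁ p = w₂ p := fun p => by rw [hw₂]
  have hKc : IsCompact K := by
    rw [hKdef]
    exact isCompact_barrierRegion hc0.le hl.le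
  have hKsub : K ⊆ Set.Icc (0 : ℝ) T ×ˢ Set.univ := by
    rw [hKdef]
    exact fun p hp => ⟨⟨hp.1.1, hp.1.2.trans hT'⟩, Set.mem_univ _⟩
  have hKt : ∀ p ∈ K, t₁ < p.1 := fun p hp => by
    rw [hKdef] at hp
    exact lt_of_mem_barrierRegion hc0 hl hp
  have hKT : ∀ p ∈ K, p.1 ≤ T' := fun p hp => by
    rw [hKdef] at hp
    exact hp.1.2
  have hbar : ContinuousOn (fun p : ℝ × Eucl n => θ * barrier c t₁ p) K := by
    rw [hKdef]
    exact (continuousOn_barrier hc0 hl).const_smul θ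
  have hc₁ : ContinuousOn w₁ K := by
    rw [hw₁]
    exact (hu₁.mono hKsub).sub hbar
  have hc₂ : ContinuousOn w₂ K := by
    rw [hw₂]
    exact (hu₂.mono hKsub).add hbar
  simp only [hw₁', hw₂', ← hKdef] at hlat hz ⊢
  by_contra! hm
  obtain ⟨m₀, hm₀⟩ : ∃ m₀, m₀ = w₁ z - w₂ z := ⟨_, rfl⟩
  have hm₀pos : 0 < m₀ := by linarith
  obtain ⟨M₁, hM₁⟩ := hKc.exists_bound_of_continuousOn hc₁
  obtain ⟨M₂, hM₂⟩ := hKc.exists_bound_of_continuousOn hc₂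
  obtain ⟨R₀, hR₀⟩ := hKc.exists_bound_of_continuousOn (f := fun p : ℝ × Eucl n => p.2)
    continuousOn_snd
  have hR₀0 : 0 ≤ R₀ := (norm_nonneg _).trans (hR₀ z hz)
  have hM₁0 : 0 ≤ M₁ := (norm_nonneg _).trans (hM₁ z hz)
  have hM₂0 : 0 ≤ M₂ := (norm_nonneg _).trans (hM₂ z hz)
  simp only [Real.norm_eq_abs] at hM₁ hM₂
  obtain ⟨κ, hκdef⟩ : ∃ κ, κ = min 1 (θ / (4 * C ^ 2 + 3 * C + 6)) := ⟨_, rfl⟩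
  have hκ0 : 0 < κ := by
    rw [hκdef]
    positivity
  have hκ1 : κ ≤ 1 := hκdef ▸ min_le_left _ _
  have hκθ : κ * (4 * C ^ 2 + 3 * C + 6) ≤ θ := by
    rw [← le_div_iff₀ (by positivity), hκdef]
    exact min_le_right _ _
  obtain ⟨κ₀, hκ₀def⟩ : ∃ κ₀, κ₀ = min (m₀ / 4) (κ / 4) := ⟨_, rfl⟩
  have hκ₀0 : 0 < κ₀ := by
    rw [hκ₀def]
    positivity
  have hκ₀m : κ₀ ≤ m₀ / 4 := hκ₀def ▸ min_le_left _ _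
  have hκ₀κ : κ₀ ≤ κ / 4 := hκ₀def ▸ min_le_right _ _
  obtain ⟨δ₁, hδ₁, huc₁⟩ := Metric.uniformContinuousOn_iff.1
    (hKc.uniformContinuousOn_of_continuous hc₁) κ₀ hκ₀0
  obtain ⟨δ₂, hδ₂, huc₂⟩ := Metric.uniformContinuousOn_iff.1
    (hKc.uniformContinuousOn_of_continuous hc₂) κ₀ hκ₀0
  obtain ⟨N, hN⟩ : ∃ N, N = 6 * (M₁ + M₂ + 1) := ⟨_, rfl⟩
  have hN1 : 0 < N := by rw [hN]; positivity
  obtain ⟨e, he, heδ₁, heδ₂, heκ⟩ := exists_pos_mul_le hN1 (half_pos hδ₁) (half_pos hδ₂) hκ0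
  obtain ⟨ε, hεdef⟩ : ∃ ε, ε = min κ (e * κ) := ⟨_, rfl⟩
  have hε0 : 0 < ε := by
    rw [hεdef]
    positivity
  obtain ⟨B, hBdef⟩ : ∃ B, B = C * (1 + R₀) := ⟨_, rfl⟩
  obtain ⟨δ₃, hδ₃, hmod⟩ := H.exists_modulus R₀ ((3 * e ^ 2)⁻¹ * κ * B) hε0
  obtain ⟨a, ha, haδ₁, haδ₂, haδ₃⟩ :=
    exists_pos_mul_le hN1 (half_pos hδ₁) (half_pos hδ₂) (half_pos hδ₃)
  obtain ⟨Z, hZdef⟩ : ∃ Z, Z = 2 * a⁻¹ + 2 * (e⁻¹ ^ 2 * B ^ 2) + 2 * (e⁻¹ * B) +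
    2 * (C * (e⁻¹ * B)) := ⟨_, rfl⟩
  have hB0 : 0 ≤ B := by
    rw [hBdef]
    positivity
  have hZ0 : 0 < Z := by
    rw [hZdef]
    positivity
  obtain ⟨r, hrdef⟩ : ∃ r, r = min (min 1 (κ / 4)) (min (κ / Z) (m₀ / 4)) := ⟨_, rfl⟩
  have hr0 : 0 < r := by
    rw [hrdef]
    positivity
  have hr1 : r ≤ 1 := hrdef ▸ (min_le_left _ _).trans (min_le_left _ _)
  have hrκ : r ≤ κ / 4 := hrdef ▸ (min_le_left _ _).trans (min_le_right _ _)
  have hrZ : r * Z ≤ κ := by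
    rw [← le_div_iff₀ hZ0, hrdef]
    exact (min_le_right _ _).trans (min_le_left _ _)
  have hrm : r ≤ m₀ / 4 := hrdef ▸ (min_le_right _ _).trans (min_le_right _ _)
  obtain ⟨⟨t, x⟩, hξ, ⟨s, y⟩, hη, q, q', X, Y, hq, hq', hdouble, hX, hY, hXY⟩ :=
    exists_doubling hKc ⟨z, hz⟩ hc₁ hc₂ ha he hr0
  obtain ⟨pen, hpen⟩ : ∃ pen, pen =
    (1 / 6) * ‖rescale a e (t, x) - rescale a e (s, y)‖ ^ 2 := ⟨_, rfl⟩
  have hpen0 : 0 ≤ pen := by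
    rw [hpen]
    positivity
  have hval : m₀ - r + pen ≤ w₁ (t, x) - w₂ (s, y) := by
    have := hdouble z hz z hz
    rw [sub_self, norm_zero, ← hpen] at this
    linarith
  have hpen_eq : pen = (1 / 6) * ((a⁻¹ * (t - s)) ^ 2 + (e⁻¹ * ‖x - y‖) ^ 2) := by
    rw [hpen, norm_rescale_sub_sq]
  have hpenN : 6 * pen ≤ N ^ 2 := by
    have h1 := (abs_le.1 (hM₁ _ hξ)).2
    have h2 := (abs_le.1 (hM₂ _ hη)).1
    have h3 : 6 * pen ≤ N := by
      rw [hN]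
      linarith only [h1, h2, hval, hr1, hm₀pos]
    have h4 : 1 ≤ N := by
      rw [hN]
      linarith only [hM₁0, hM₂0]
    exact h3.trans (le_self_pow₀ h4 two_ne_zero)
  have hts : |t - s| ≤ a * N := by
    refine abs_le_mul_of_inv_mul_sq_le ha hN1.le ?_
    linarith only [hpen_eq, hpenN, sq_nonneg (e⁻¹ * ‖x - y‖)]
  have hxy : ‖x - y‖ ≤ e * N := by
    refine (le_abs_self _).trans (abs_le_mul_of_inv_mul_sq_le he hN1.le ?_)
    linarith only [hpen_eq, hpenN, sq_nonneg (a⁻¹ * (t - s))]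
  have hdist : ∀ δ, a * N ≤ δ / 2 → e * N ≤ δ / 2 → 0 < δ →
      dist ((t, x) : ℝ × Eucl n) (s, y) < δ := by
    intro δ h1 h2 hδ
    rw [Prod.dist_eq, Real.dist_eq, dist_eq_norm]
    exact max_lt (by linarith only [hts, h1, hδ]) (by linarith only [hxy, h2, hδ])
  have hd₁ := huc₁ _ hξ _ hη (hdist δ₁ haδ₁ heδ₁ hδ₁)
  have hd₂ := huc₂ _ hξ _ hη (hdist δ₂ haδ₂ heδ₂ hδ₂)
  rw [Real.dist_eq, abs_lt] at hd₁ hd₂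
  have hpenκ : 2 * pen ≤ κ := by
    have := hdouble _ hξ _ hξ
    rw [sub_self, norm_zero, ← hpen] at this
    linarith only [this, hd₂.2, hκ₀κ, hrκ]
  have hρe : (3 * e ^ 2)⁻¹ * ‖x - y‖ ^ 2 ≤ κ := by
    rw [inv_three_mul_sq_mul_sq]
    linarith only [hpen_eq, hpenκ, sq_nonneg (a⁻¹ * (t - s))]
  have hcmp : ∀ y, w₁ (T', y) ≤ w₂ (T', y) := by
    intro y
    rw [hw₁, hw₂]
    have := mul_nonneg hθ.le (barrier_pos c t₁ (T', y)).le
    linarith only [hterm y, this]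
  have htT : t < T' := by
    refine lt_of_le_of_ne (hKT _ hξ) ?_
    rintro rfl
    linarith only [hcmp x, hd₂.2, hval, hpen0, hκ₀m, hrm, hm₀pos]
  have hsT : s < T' := by
    refine lt_of_le_of_ne (hKT _ hη) ?_
    rintro rfl
    linarith only [hcmp y, hd₁.2, hval, hpen0, hκ₀m, hrm, hm₀pos]
  have hχξ : barrier c t₁ (t, x) < Real.exp l := by
    by_contra! h
    linarith only [hlat _ hξ _ hη (Or.inl h), hval, hpen0, hrm, hm₀pos]
  have hχη : barrier c t₁ (s, y) < Real.exp l := by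
    by_contra! h
    linarith only [hlat _ hξ _ hη (Or.inr h), hval, hpen0, hrm, hm₀pos]
  have ht₁ : t₁ < t := hKt _ hξ
  have hs₁ : t₁ < s := hKt _ hη
  have hinv : ∀ t, t₁ < t → t < T' → 1 ≤ (c * (t - t₁))⁻¹ := by
    intro t h1 h2
    refine (one_le_inv₀ (mul_pos hc0 (sub_pos.2 h1))).2 (le_trans ?_ hct)
    gcongr
  have htI := hKsub hξ
  have hsI := hKsub hη
  have hmax : IsLocalMaxOn (fun p : ℝ × Eucl n => u₁ p.1 p.2 - touching c t₁ θ a e q X r (t, x) p)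
      (Set.Icc (0 : ℝ) T ×ˢ (Set.univ : Set (Eucl n))) (t, x) := by
    have hnhds := barrierRegion_mem_nhdsWithin (T := T) hc0 ht₁ htT hχξ
    rw [← hKdef] at hnhds
    filter_upwards [hnhds, mem_nhdsWithin_of_mem_nhds hX] with p hpK hp
    have := hp hpK
    simp only [hw₁] at this
    rw [touching_self]
    unfold touching
    linarith only [this]
  have hmin : IsLocalMinOn
      (fun p : ℝ × Eucl n => u₂ p.1 p.2 - touching c t₁ (-θ) a e q' Y (-r) (s, y) p)
      (Set.Icc (0 : ℝ) T ×ˢ (Set.univ : Set (Eucl n))) (s, y) := by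
    have hnhds := barrierRegion_mem_nhdsWithin (T := T) hc0 hs₁ hsT hχη
    rw [← hKdef] at hnhds
    filter_upwards [hnhds, mem_nhdsWithin_of_mem_nhds hY] with p hpK hp
    have := hp hpK
    simp only [hw₂] at this
    rw [touching_self]
    unfold touching
    linarith only [this]
  have hxB : C * (1 + ‖x‖) ≤ B := by
    rw [hBdef]
    gcongr
    exact hR₀ (t, x) hξ
  have hyB : C * (1 + ‖y‖) ≤ B := by
    rw [hBdef]
    gcongr
    exact hR₀ (s, y) hη
  have hm := hmod t htI.1 s hsI.1 (by linarith only [hts, haδ₃, hδ₃]) y (hR₀ (s, y) hη)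
  have hDσ : ∀ u v, ‖σ t x u v - σ s y u v‖ ≤ C * ‖x - y‖ + ε := fun u v =>
    (norm_sub_le_norm_sub_add_norm_sub _ (σ t y u v) _).trans
      (add_le_add (H.σ_lip t htI.1 x y u v) (hm u v).2.1)
  have hDb : ∀ u v, ‖b t x u v - b s y u v‖ ≤ C * ‖x - y‖ + ε := fun u v =>
    (norm_sub_le_norm_sub_add_norm_sub _ (b t y u v) _).trans
      (add_le_add (H.b_lip t htI.1 x y u v) (hm u v).1)
  have hpnorm : ‖(3 * e ^ 2)⁻¹ • (x - y)‖ = (3 * e ^ 2)⁻¹ * ‖x - y‖ := by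
    rw [norm_smul, Real.norm_eq_abs, abs_of_nonneg (by positivity)]
  have hDf : ∀ u v, f t x 0 (rowMul ((3 * e ^ 2)⁻¹ • (x - y)) (σ t x u v)) u v -
      f s y 0 (rowMul ((3 * e ^ 2)⁻¹ • (x - y)) (σ s y u v)) u v ≤
      C * (‖x - y‖ + (3 * e ^ 2)⁻¹ * ‖x - y‖ * (C * ‖x - y‖ + ε)) + ε := by
    intro u v
    have h1 := (le_abs_self _).trans (H.f_lip t htI.1 x y
      (rowMul ((3 * e ^ 2)⁻¹ • (x - y)) (σ t x u v))
      (rowMul ((3 * e ^ 2)⁻¹ • (x - y)) (σ s y u v)) u v)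
    have h2 := (hm u v).2.2 (rowMul ((3 * e ^ 2)⁻¹ • (x - y)) (σ s y u v)) (by
      refine (norm_rowMul_le _ _).trans ?_
      rw [hpnorm]
      gcongr
      · exact hxy.trans heκ
      · exact (H.σ_growth s hsI.1 y u v).trans hyB)
    have h3 : ‖rowMul ((3 * e ^ 2)⁻¹ • (x - y)) (σ t x u v) -
        rowMul ((3 * e ^ 2)⁻¹ • (x - y)) (σ s y u v)‖ ≤
        (3 * e ^ 2)⁻¹ * ‖x - y‖ * (C * ‖x - y‖ + ε) := by
      rw [← rowMul_sub_right, ← hpnorm]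
      refine (norm_rowMul_le _ _).trans ?_
      gcongr
      exact hDσ u v
    have h4 := mul_le_mul_of_nonneg_left h3 hC
    linarith only [h1, h2, h4]
  have hfin := H.le_of_touching hsub hsuper hc ⟨htI.1.1, htT.trans_le hT'⟩
    ⟨hsI.1.1, hsT.trans_le hT'⟩ ht₁ hs₁ (hinv t ht₁ htT) (hinv s hs₁ hsT) ha he hr0.le hθ.le
    hq hq' hXY hmax hmin hxB hyB hDσ hDb hDf
  rw [← hZdef] at hfin
  have herr := penalization_error_le hC he hκ1 (norm_nonneg (x - y)) (hxy.trans heκ) hε0.le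
    (hεdef ▸ min_le_left _ _) (hεdef ▸ min_le_right _ _) hρe rfl hrZ
  linarith only [hfin, herr, hκθ, hθ]

end Comparison

section Comparison

open Filter Topology

variable {n d : ℕ} {U V : Type*} [MetricSpace U] [CompactSpace U] [Nonempty U]
  [MetricSpace V] [CompactSpace V] [Nonempty V] {T C : ℝ} {b : ℝ → Eucl n → U → V → Eucl n}
  {σ : ℝ → Eucl n → U → V → Matrix (Fin n) (Fin d) ℝ}
  {f : ℝ → Eucl n → ℝ → Eucl d → U → V → ℝ} {u₁ u₂ : ℝ → Eucl n → ℝ} {Φ₁ Φ₂ : Eucl n → ℝ}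

/-- The barrier dominates functions of the growth class near the end of a short time interval. -/
lemma abs_sub_mul_barrier_le {c t₁ T' A C₁ θ φ : ℝ} (hc : 0 < c) (hA : 0 < A) (hθ : 0 < θ)
    (hct : 2 * A * (c * (T' - t₁)) ≤ 1) {p : ℝ × Eucl n} (hp : t₁ < p.1) (hpT : p.1 ≤ T')
    (hφ : |φ| ≤ C₁ * Real.exp (A * logWeight (‖p.2‖ ^ 2) ^ 2)) :
    |φ| - θ * barrier c t₁ p ≤ C₁ ^ 2 / (2 * θ) - θ / 2 * barrier c t₁ p := by
  obtain ⟨E, hE⟩ : ∃ E, E = Real.exp (A * logWeight (‖p.2‖ ^ 2) ^ 2) := ⟨_, rfl⟩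
  rw [← hE] at hφ
  have hpos : 0 < c * (p.1 - t₁) := mul_pos hc (sub_pos.2 hp)
  have hinv : 2 * A ≤ (c * (p.1 - t₁))⁻¹ := by
    rw [← one_div, le_div_iff₀ hpos]
    refine le_trans ?_ hct
    gcongr
  have hχ : E ^ 2 ≤ barrier c t₁ p := by
    rw [hE, ← Real.exp_nat_mul, barrier, Real.exp_le_exp]
    push_cast
    rw [← mul_assoc]
    gcongr
  have h1 : C₁ * E ≤ C₁ ^ 2 / (2 * θ) + θ / 2 * E ^ 2 := by
    have h2 : C₁ ^ 2 / (2 * θ) + θ / 2 * E ^ 2 - C₁ * E = (C₁ - θ * E) ^ 2 / (2 * θ) := by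
      field_simp
      ring
    have h3 : 0 ≤ (C₁ - θ * E) ^ 2 / (2 * θ) := by positivity
    linarith
  have h4 := mul_le_mul_of_nonneg_left hχ hθ.le
  linarith

/-- Comparison on a short time interval. -/
theorem RegularCoefficients.le_of_terminal_le (H : RegularCoefficients T C b σ f)
    (hsub : IsViscositySubsolution T (lowerHamiltonian b σ f) Φ₁ u₁)
    (hsuper : IsViscositySupersolution T (lowerHamiltonian b σ f) Φ₂ u₂)
    (hu₁ : ContinuousOn (fun p : ℝ × Eucl n => u₁ p.1 p.2) (Set.Icc (0 : ℝ) T ×ˢ Set.univ))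
    (hu₂ : ContinuousOn (fun p : ℝ × Eucl n => u₂ p.1 p.2) (Set.Icc (0 : ℝ) T ×ˢ Set.univ))
    {A C₁ : ℝ} (hA : 1 ≤ A)
    (hg₁ : ∀ t ∈ Set.Icc (0 : ℝ) T, ∀ x : Eucl n,
      |u₁ t x| ≤ C₁ * Real.exp (A * logWeight (‖x‖ ^ 2) ^ 2))
    (hg₂ : ∀ t ∈ Set.Icc (0 : ℝ) T, ∀ x : Eucl n,
      |u₂ t x| ≤ C₁ * Real.exp (A * logWeight (‖x‖ ^ 2) ^ 2))
    {c t₁ T' : ℝ} (hc : 6 * C ^ 2 + 4 * C + 4 * C * C + 1 ≤ c) (hT' : T' ≤ T)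
    (hct : 2 * A * (c * (T' - t₁)) ≤ 1) (hterm : ∀ x, u₁ T' x ≤ u₂ T' x) {t : ℝ} (ht0 : 0 ≤ t)
    (ht₁ : t₁ < t) (htT : t ≤ T') (x : Eucl n) : u₁ t x ≤ u₂ t x := by
  have hC := H.nonneg
  have hc0 : 0 < c := by nlinarith
  have hA0 : 0 < A := by linarith
  have hT'₁ : 0 < c * (T' - t₁) := mul_pos hc0 (by linarith)
  have hct1 : c * (T' - t₁) ≤ 1 := by nlinarith
  have hχ := barrier_pos c t₁ (t, x)
  refine le_of_forall_pos_le_add fun ε hε => ?_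
  obtain ⟨θ, hθdef⟩ : ∃ θ, θ = ε / (2 * barrier c t₁ (t, x)) := ⟨_, rfl⟩
  have hθ : 0 < θ := by
    rw [hθdef]
    positivity
  obtain ⟨l, hldef⟩ : ∃ l, l = 2 * C₁ ^ 2 / θ ^ 2 + barrier c t₁ (t, x) := ⟨_, rfl⟩
  have hl : 0 < l := by
    rw [hldef]
    positivity
  have hexp : l ≤ Real.exp l := by linarith [Real.add_one_le_exp l]
  have hlat : ∀ ξ ∈ barrierRegion n c t₁ T' l, ∀ η ∈ barrierRegion n c t₁ T' l,
      Real.exp l ≤ barrier c t₁ ξ ∨ Real.exp l ≤ barrier c t₁ η →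
      u₁ ξ.1 ξ.2 - θ * barrier c t₁ ξ ≤ u₂ η.1 η.2 + θ * barrier c t₁ η := by
    intro ξ hξ η hη h
    have h1 := abs_sub_mul_barrier_le hc0 hA0 hθ hct (lt_of_mem_barrierRegion hc0 hl hξ) hξ.1.2
      (hg₁ ξ.1 ⟨hξ.1.1, hξ.1.2.trans hT'⟩ ξ.2)
    have h2 := abs_sub_mul_barrier_le hc0 hA0 hθ hct (lt_of_mem_barrierRegion hc0 hl hη) hη.1.2
      (hg₂ η.1 ⟨hη.1.1, hη.1.2.trans hT'⟩ η.2)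
    have h3 : 2 * (C₁ ^ 2 / (2 * θ)) ≤ θ / 2 * (barrier c t₁ ξ + barrier c t₁ η) := by
      have h4 : 2 * C₁ ^ 2 / θ ^ 2 ≤ barrier c t₁ ξ + barrier c t₁ η := by
        rcases h with h | h <;> linarith [barrier_pos c t₁ ξ, barrier_pos c t₁ η]
      refine le_trans (le_of_eq ?_) (mul_le_mul_of_nonneg_left h4 (half_pos hθ).le)
      field_simp
    linarith [le_abs_self (u₁ ξ.1 ξ.2), neg_abs_le (u₂ η.1 η.2)]
  have hz : (t, x) ∈ barrierRegion n c t₁ T' l := by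
    refine (mem_barrierRegion_iff hc0 ht₁).2 ⟨⟨ht0, htT⟩, le_trans ?_ hexp⟩
    rw [hldef]
    linarith [show 0 ≤ 2 * C₁ ^ 2 / θ ^ 2 by positivity]
  have h := H.sub_le_add_barrier hsub hsuper hu₁ hu₂ hc hl hθ hT' hct1 hterm hlat hz
  have h5 : 2 * (θ * barrier c t₁ (t, x)) = ε := by
    rw [hθdef]
    field_simp
  simp only at h
  linarith

/-- Comparison on the whole time interval, by iteration over short intervals. -/
theorem RegularCoefficients.comparison (H : RegularCoefficients T C b σ f)
    (hsub : IsViscositySubsolution T (lowerHamiltonian b σ f) Φ₁ u₁)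
    (hsuper : IsViscositySupersolution T (lowerHamiltonian b σ f) Φ₂ u₂)
    (hu₁ : MemTheta T u₁) (hu₂ : MemTheta T u₂) (hterm : ∀ x, u₁ T x ≤ u₂ T x) :
    ∀ t ∈ Set.Icc (0 : ℝ) T, ∀ x : Eucl n, u₁ t x ≤ u₂ t x := by
  obtain ⟨A₁, C₁, hA₁, hC₁, hg₁⟩ := hu₁.exists_abs_le
  obtain ⟨A₂, C₂, hA₂, hC₂, hg₂⟩ := hu₂.exists_abs_le
  obtain ⟨A, hA⟩ : ∃ A, A = max A₁ A₂ := ⟨_, rfl⟩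
  have hA1 : 1 ≤ A := hA ▸ hA₁.trans (le_max_left _ _)
  have hg₁' : ∀ t ∈ Set.Icc (0 : ℝ) T, ∀ x : Eucl n,
      |u₁ t x| ≤ max C₁ C₂ * Real.exp (A * logWeight (‖x‖ ^ 2) ^ 2) := fun t ht x => by
    refine (hg₁ t ht x).trans ?_
    rw [hA]
    gcongr
    · exact le_max_left _ _
    · exact le_max_left _ _
  have hg₂' : ∀ t ∈ Set.Icc (0 : ℝ) T, ∀ x : Eucl n,
      |u₂ t x| ≤ max C₁ C₂ * Real.exp (A * logWeight (‖x‖ ^ 2) ^ 2) := fun t ht x => by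
    refine (hg₂ t ht x).trans ?_
    rw [hA]
    gcongr
    · exact le_max_right _ _
    · exact le_max_right _ _
  have hC := H.nonneg
  obtain ⟨c, hc⟩ : ∃ c, c = 6 * C ^ 2 + 4 * C + 4 * C * C + 1 := ⟨_, rfl⟩
  have hc0 : 0 < c := by
    rw [hc]
    positivity
  obtain ⟨τ, hτdef⟩ : ∃ τ, τ = 1 / (2 * A * c) := ⟨_, rfl⟩
  have hτ : 0 < τ := by
    rw [hτdef]
    positivity
  have hiter : ∀ k : ℕ, ∀ t ∈ Set.Icc (0 : ℝ) T, T - k * (τ / 2) ≤ t → ∀ x, u₁ t x ≤ u₂ t x := by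
    intro k
    induction k with
    | zero =>
      intro t ht htT x
      obtain rfl : t = T := le_antisymm ht.2 (by simpa using htT)
      exact hterm x
    | succ k ih =>
      intro t ht htT x
      rcases le_total (T - k * (τ / 2)) t with h | h
      · exact ih t ht h x
      have hk : 0 ≤ (k : ℝ) * (τ / 2) := by positivity
      push_cast at htT
      refine H.le_of_terminal_le hsub hsuper hu₁.1 hu₂.1 hA1 hg₁' hg₂' hc.ge (by linarith)
        (t₁ := T - k * (τ / 2) - τ) ?_ (ih _ ⟨ht.1.trans h, by linarith⟩ le_rfl) ht.1
        (by linarith) h x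
      rw [sub_sub_cancel, hτdef]
      field_simp
      rfl
  intro t ht x
  obtain ⟨k, hk⟩ := exists_nat_ge (T / (τ / 2))
  rw [div_le_iff₀ (half_pos hτ)] at hk
  exact hiter k t ht (by linarith [ht.1]) x

omit [Nonempty U] [Nonempty V] in
/-- Continuity in `(t, u, v)` together with the Lipschitz conditions yields uniform constants. -/
theorem exists_regularCoefficients
    (hb : ∀ x : Eucl n, ContinuousOn (fun q : ℝ × U × V => b q.1 x q.2.1 q.2.2)
      (Set.Icc (0 : ℝ) T ×ˢ (Set.univ : Set (U × V))))
    (hσ : ∀ x : Eucl n, ContinuousOn (fun q : ℝ × U × V => σ q.1 x q.2.1 q.2.2)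
      (Set.Icc (0 : ℝ) T ×ˢ (Set.univ : Set (U × V))))
    (hbσ : ∃ C > (0 : ℝ), ∀ t ∈ Set.Icc (0 : ℝ) T, ∀ (x x' : Eucl n) (u : U) (v : V),
      ‖b t x u v - b t x' u v‖ + ‖σ t x u v - σ t x' u v‖ ≤ C * ‖x - x'‖)
    (hf : ∀ (x : Eucl n) (y : ℝ) (z : Eucl d), ContinuousOn
      (fun q : ℝ × U × V => f q.1 x y z q.2.1 q.2.2)
      (Set.Icc (0 : ℝ) T ×ˢ (Set.univ : Set (U × V))))
    (hfl : ∃ C > (0 : ℝ), ∀ t ∈ Set.Icc (0 : ℝ) T,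
      ∀ (x x' : Eucl n) (y y' : ℝ) (z z' : Eucl d) (u : U) (v : V),
      |f t x y z u v - f t x' y' z' u v| ≤ C * (‖x - x'‖ + |y - y'| + ‖z - z'‖)) :
    ∃ C, RegularCoefficients T C b σ f := by
  obtain ⟨C₁, hC₁, h₁⟩ := hbσ
  obtain ⟨C₂, hC₂, h₂⟩ := hfl
  obtain ⟨B₁, hB₁⟩ := exists_bound_of_continuousOn_Icc (g := fun t u v => b t 0 u v) (hb 0)
  obtain ⟨B₂, hB₂⟩ := exists_bound_of_continuousOn_Icc (g := fun t u v => σ t 0 u v) (hσ 0)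
  obtain ⟨C, hC⟩ : ∃ C, C = max (max C₁ C₂) (max B₁ B₂) := ⟨_, rfl⟩
  have hCC₁ : C₁ ≤ C := hC ▸ (le_max_left _ _).trans (le_max_left _ _)
  have hCC₂ : C₂ ≤ C := hC ▸ (le_max_right _ _).trans (le_max_left _ _)
  have hCB₁ : B₁ ≤ C := hC ▸ (le_max_left _ _).trans (le_max_right _ _)
  have hCB₂ : B₂ ≤ C := hC ▸ (le_max_right _ _).trans (le_max_right _ _)
  have hbl : ∀ t ∈ Set.Icc (0 : ℝ) T, ∀ (x x' : Eucl n) (u : U) (v : V),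
      ‖b t x u v - b t x' u v‖ ≤ C * ‖x - x'‖ := fun t ht x x' u v =>
    (le_add_of_nonneg_right (norm_nonneg _)).trans ((h₁ t ht x x' u v).trans (by gcongr))
  have hσl : ∀ t ∈ Set.Icc (0 : ℝ) T, ∀ (x x' : Eucl n) (u : U) (v : V),
      ‖σ t x u v - σ t x' u v‖ ≤ C * ‖x - x'‖ := fun t ht x x' u v =>
    (le_add_of_nonneg_left (norm_nonneg _)).trans ((h₁ t ht x x' u v).trans (by gcongr))
  refine ⟨C, hC₁.le.trans hCC₁, hb, hσ, fun x z => hf x 0 z, hbl, hσl, ?_, ?_, ?_⟩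
  · intro t ht x x' z z' u v
    refine (h₂ t ht x x' 0 0 z z' u v).trans ?_
    rw [sub_self, abs_zero, add_zero]
    gcongr
  · intro t ht x u v
    have h := hbl t ht x 0 u v
    rw [sub_zero] at h
    linarith [hB₁ t ht u v, norm_le_norm_sub_add (b t x u v) (b t 0 u v)]
  · intro t ht x u v
    have h := hσl t ht x 0 u v
    rw [sub_zero] at h
    linarith [hB₂ t ht u v, norm_le_norm_sub_add (σ t x u v) (σ t 0 u v)]

end Comparison

/-- **Theorem 6.1 (comparison).** A viscosity subsolution `u₁ ∈ Θ` of the lower Isaacs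
equation is dominated by any viscosity supersolution `u₂ ∈ Θ`. -/
theorem comparison_viscosity_isaacs_lower
    {n d : ℕ} (hn : 1 ≤ n) (hd : 1 ≤ d) {T : ℝ} (hT : 0 < T)
    {U V : Type*} [MetricSpace U] [CompactSpace U] [Nonempty U]
    [MetricSpace V] [CompactSpace V] [Nonempty V]
    (b : ℝ → Eucl n → U → V → Eucl n)
    (σ : ℝ → Eucl n → U → V → Matrix (Fin n) (Fin d) ℝ)
    (f : ℝ → Eucl n → ℝ → Eucl d → U → V → ℝ)
    (Φ : Eucl n → ℝ)
    -- (H4.1)(i): for fixed `x`, `b(·,x,·,·)` and `σ(·,x,·,·)` are continuous in `(t,u,v)`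
    (hb_cont : ∀ x : Eucl n, ContinuousOn
      (fun q : ℝ × U × V => b q.1 x q.2.1 q.2.2)
      (Set.Icc (0 : ℝ) T ×ˢ (Set.univ : Set (U × V))))
    (hσ_cont : ∀ x : Eucl n, ContinuousOn
      (fun q : ℝ × U × V => σ q.1 x q.2.1 q.2.2)
      (Set.Icc (0 : ℝ) T ×ˢ (Set.univ : Set (U × V))))
    -- (H4.1)(ii): `b` and `σ` are Lipschitz in `x`, uniformly in `(t,u,v)`
    (hbσ_lip : ∃ C > (0 : ℝ), ∀ t ∈ Set.Icc (0 : ℝ) T, ∀ (x x' : Eucl n) (u : U) (v : V),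
      ‖b t x u v - b t x' u v‖ + ‖σ t x u v - σ t x' u v‖ ≤ C * ‖x - x'‖)
    -- (H4.2)(i): for fixed `(x,y,z)`, `f(·,x,y,z,·,·)` is continuous in `(t,u,v)`
    (hf_cont : ∀ (x : Eucl n) (y : ℝ) (z : Eucl d), ContinuousOn
      (fun q : ℝ × U × V => f q.1 x y z q.2.1 q.2.2)
      (Set.Icc (0 : ℝ) T ×ˢ (Set.univ : Set (U × V))))
    -- (H4.2): `f` is Lipschitz in `(x,y,z)`, uniformly in `(t,u,v)`
    (hf_lip : ∃ C > (0 : ℝ), ∀ t ∈ Set.Icc (0 : ℝ) T,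
      ∀ (x x' : Eucl n) (y y' : ℝ) (z z' : Eucl d) (u : U) (v : V),
      |f t x y z u v - f t x' y' z' u v| ≤ C * (‖x - x'‖ + |y - y'| + ‖z - z'‖))
    -- (H4.2): `Φ` is Lipschitz
    (hΦ_lip : ∃ C > (0 : ℝ), ∀ x x' : Eucl n, |Φ x - Φ x'| ≤ C * ‖x - x'‖)
    (u₁ u₂ : ℝ → Eucl n → ℝ)
    (hu₁Θ : MemTheta T u₁) (hu₂Θ : MemTheta T u₂)
    (hsub : IsViscositySubsolution T (lowerHamiltonian b σ f) Φ u₁)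
    (hsuper : IsViscositySupersolution T (lowerHamiltonian b σ f) Φ u₂) :
    ∀ t ∈ Set.Icc (0 : ℝ) T, ∀ x : Eucl n, u₁ t x ≤ u₂ t x := by
  obtain ⟨C, hC⟩ := exists_regularCoefficients hb_cont hσ_cont hbσ_lip hf_cont hf_lip
  exact hC.comparison hsub hsuper hu₁Θ hu₂Θ fun x => (hsub.1 x).trans (hsuper.1 x)
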